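/- arXiv:2604.05949 — 9 statements merged into one kernel-verified Lean document; each statement's English description precedes it below -/
import Mathlib

section
/- Let τ ∈ 𝓛 and a ∈ ℝ. Then τ is coarse at a if and only if every set in the filter of τ-neighborhoods of a is an unbounded subset of ℝ. -/
/-!
If some `τ`-neighborhood `S` of `a` is bounded, it lies in a closed ball `K`. For a Euclidean open
`V` containing `a`, the set `K \ V` is Euclidean compact, hence `τ`-compact since `τ` is coarser,
hence `τ`-closed since `τ` is Hausdorff. So `S ∩ (K \ V)ᶜ ⊆ V` is a `τ`-neighborhood of `a`, and the
two neighborhood filters at `a` agree. Conversely, if they agree, the unit ball around `a` is a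
bounded `τ`-neighborhood.
-/

open Topology Set

noncomputable section

/-- The Euclidean topology on `ℝ`. -/
def eta : TopologicalSpace ℝ := inferInstance

/-- `Coarser τ₁ τ₂` means every `τ₁`-open set is `τ₂`-open, i.e. `τ₁ ⊆ τ₂`
as families of open sets. -/
def Coarser (τ₁ τ₂ : TopologicalSpace ℝ) : Prop :=
  ∀ U : Set ℝ, IsOpen[τ₁] U → IsOpen[τ₂] U

/-- The family `𝓛`: Hausdorff topologies on `ℝ` coarser than the Euclidean one. -/
def InL (τ : TopologicalSpace ℝ) : Prop :=
  Coarser τ eta ∧ @T2Space ℝ τ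

/-- `τ` is coarse at `a`: the `τ`-neighborhood filter of `a` differs from the
Euclidean one. -/
def CoarseAt (τ : TopologicalSpace ℝ) (a : ℝ) : Prop :=
  @nhds ℝ τ a ≠ @nhds ℝ eta a

/-- `C(τ)`: the set of points at which `τ` is coarse. -/
def Cset (τ : TopologicalSpace ℝ) : Set ℝ := {a | CoarseAt τ a}

/-- The family `𝓛₀`: topologies in `𝓛` with `C(τ) ⊆ {0}`. -/
def InL0 (τ : TopologicalSpace ℝ) : Prop := InL τ ∧ Cset τ ⊆ {0}

/-- `(ℝ, τ)` is completely metrizable. -/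
def CompletelyMetrizable (τ : TopologicalSpace ℝ) : Prop :=
  ∃ m : MetricSpace ℝ,
    m.toUniformSpace.toTopologicalSpace = τ ∧ @CompleteSpace ℝ m.toUniformSpace

end

theorem isCompact_closedBall_diff_eta (R : ℝ) {V : Set ℝ} (hV : IsOpen[eta] V) :
    @IsCompact ℝ eta (Metric.closedBall (0 : ℝ) R \ V) :=
  (isCompact_closedBall (0 : ℝ) R).diff hV

/-- For τ ∈ 𝓛 and a ∈ ℝ, τ is coarse at a iff every set in the
filter of τ-neighborhoods of a is an unbounded subset of ℝ. -/
theorem statement_0 (τ : TopologicalSpace ℝ) (hτ : InL τ) (a : ℝ) :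
    CoarseAt τ a ↔ ∀ S ∈ @nhds ℝ τ a, ¬ Bornology.IsBounded S := by
  obtain ⟨hle, hT2⟩ := hτ
  have hcont : @Continuous ℝ ℝ eta τ id := continuous_def.2 hle
  constructor
  · intro hne S hS hb
    refine hne (le_antisymm ?_ ?_)
    · intro U hU
      obtain ⟨V, hVU, hV, haV⟩ := (@mem_nhds_iff ℝ eta a U).1 hU
      obtain ⟨R, hR⟩ := hb.subset_closedBall (0 : ℝ)
      have hK : @IsCompact ℝ eta (Metric.closedBall (0 : ℝ) R \ V) :=
        isCompact_closedBall_diff_eta R hV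
      -- Compactness passes to the coarser topology, where Hausdorffness gives closedness.
      have hK' : @IsCompact ℝ τ (Metric.closedBall (0 : ℝ) R \ V) := by
        have := @IsCompact.image ℝ ℝ eta τ _ id hK hcont
        rwa [image_id] at this
      have hcl : @IsClosed ℝ τ (Metric.closedBall (0 : ℝ) R \ V) :=
        @IsCompact.isClosed ℝ τ hT2 _ hK'
      have hmem : (Metric.closedBall (0 : ℝ) R \ V)ᶜ ∈ @nhds ℝ τ a :=
        @IsOpen.mem_nhds ℝ τ a _ (@IsClosed.isOpen_compl ℝ τ _ hcl) (fun h => h.2 haV)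
      filter_upwards [hS, hmem] with x hxS hx
      by_contra hxU
      exact hx ⟨hR hxS, fun hxV => hxU (hVU hxV)⟩
    · exact @Continuous.tendsto ℝ ℝ eta τ id hcont a
  · intro h heq
    refine h (Metric.ball a 1) ?_ Metric.isBounded_ball
    rw [heq]
    exact Metric.ball_mem_nhds a one_pos
end

section
/- Let τ ∈ 𝓛. Then the space (ℝ, τ) is of first category if and only if every nonempty τ-open set is an unbounded subset of ℝ. -/
/-!
A Euclidean compact set is compact, hence closed, in every coarser Hausdorff topology `τ`
(`isClosed_of_isCompact`).

If every nonempty `τ`-open set is unbounded, then the intervals `[-n, n]` are `τ`-closed with empty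
`τ`-interior, so they exhibit `ℝ` as a countable union of `τ`-nowhere dense sets.

Conversely, let `U` be a nonempty bounded `τ`-open set. Every Euclidean open `V ⊆ U` is `τ`-open
(`isOpen_of_subset_bounded`): if `K` is a closed ball containing `U`, then `V = U \ (K \ V)` and
`K \ V` is compact. Hence `τ`-dense `τ`-open sets are Euclidean dense in `U`, and the
Baire category theorem for the Euclidean line (`baire_in_open`) shows that countably many of them always have a
common point in `U`; so `(ℝ, τ)` is not meagre.
-/

open Topology Set

/-- The Baire category theorem for the Euclidean line, localized to an open set `U`. -/
theorem baire_in_open {S : Set (Set ℝ)} (hSc : S.Countable) (hSo : ∀ t ∈ S, IsOpen t)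
    {U : Set ℝ} (hU : IsOpen U) (hne : U.Nonempty)
    (hSd : ∀ t ∈ S, ∀ V : Set ℝ, IsOpen V → V ⊆ U → V.Nonempty → (V ∩ t).Nonempty) :
    (U ∩ ⋂₀ S).Nonempty := by
  -- Adding the exterior of `U` makes each `t ∈ S` dense in the whole line.
  have hd : Dense (⋂ t ∈ S, (t ∪ (closure U)ᶜ)) := by
    refine dense_biInter_of_isOpen (fun t ht => ?_) hSc (fun t ht => ?_)
    · exact (hSo t ht).union isClosed_closure.isOpen_compl
    · rw [dense_iff_inter_open]
      intro V hV hVne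
      by_cases h : (V ∩ U).Nonempty
      · obtain ⟨x, hx, hxt⟩ := hSd t ht _ (hV.inter hU) inter_subset_right h
        exact ⟨x, hx.1, Or.inl hxt⟩
      · obtain ⟨x, hx⟩ := hVne
        refine ⟨x, hx, Or.inr fun hxc => h ?_⟩
        exact mem_closure_iff.1 hxc V hV hx
  obtain ⟨x, hxU, hx⟩ := hd.inter_open_nonempty U hU hne
  refine ⟨x, hxU, fun t ht => ?_⟩
  exact (mem_iInter₂.1 hx t ht).resolve_right fun h => h (subset_closure hxU)

-- Below, Euclidean hypotheses are bound before `τ`: once `τ` is in the local context,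
-- instance search would select it instead of the Euclidean topology.

theorem isClosed_of_isCompact {K : Set ℝ} (hK : IsCompact K) {τ : TopologicalSpace ℝ}
    (hτ : InL τ) : IsClosed[τ] K := by
  have hc : @Continuous ℝ ℝ eta τ id := @Continuous.mk ℝ ℝ eta τ id fun U hU => hτ.1 U hU
  have h := @IsCompact.image ℝ ℝ eta τ K id hK hc
  rw [image_id] at h
  exact @IsCompact.isClosed ℝ τ hτ.2 K h

theorem isOpen_of_subset_bounded {U V : Set ℝ} (hb : Bornology.IsBounded U) (hV : IsOpen V)
    (hVU : V ⊆ U) {τ : TopologicalSpace ℝ} (hτ : InL τ) (hU : IsOpen[τ] U) :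
    IsOpen[τ] V := by
  obtain ⟨r, hr⟩ := hb.subset_closedBall 0
  have hcl := isClosed_of_isCompact
    (@IsCompact.diff ℝ eta _ _ (isCompact_closedBall (0 : ℝ) r) hV) hτ
  have h := @IsOpen.inter ℝ τ _ _ hU (@IsClosed.isOpen_compl ℝ τ _ hcl)
  have e : V = U ∩ (Metric.closedBall (0 : ℝ) r \ V)ᶜ := by
    ext x
    have h1 := @hr x
    have h2 := @hVU x
    simp only [mem_inter_iff, mem_compl_iff, mem_sdiff]
    tauto
  rw [e]
  exact h

/-- For τ ∈ 𝓛, the space (ℝ, τ) is of first category (meager in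
itself) iff every nonempty τ-open set is an unbounded subset of ℝ. -/
theorem statement_1 (τ : TopologicalSpace ℝ) (hτ : InL τ) :
    @IsMeagre ℝ τ Set.univ ↔
      ∀ U : Set ℝ, IsOpen[τ] U → U.Nonempty → ¬ Bornology.IsBounded U := by
  constructor
  · intro hm U hU hne hb
    have hm' : (univ : Set ℝ)ᶜ ∈ @residual ℝ τ := hm
    obtain ⟨S, hSo, hSd, hSc, hS⟩ := (@mem_residual_iff ℝ τ _).1 hm'
    obtain ⟨x, -, hx⟩ := baire_in_open hSc (fun t ht => hτ.1 t (hSo t ht)) (hτ.1 U hU) hne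
      fun t ht V hV hVU hVne => (@dense_iff_inter_open ℝ τ t).1 (hSd t ht) V
        (isOpen_of_subset_bounded hb hV hVU hτ hU) hVne
    exact hS hx (mem_univ x)
  · intro h
    have hn : ∀ n : ℕ, @IsMeagre ℝ τ (Metric.closedBall (0 : ℝ) n) := by
      intro n
      have hcl := isClosed_of_isCompact (isCompact_closedBall (0 : ℝ) n) hτ
      refine @IsNowhereDense.isMeagre ℝ τ _ ((@IsClosed.isNowhereDense_iff ℝ τ _ hcl).2 ?_)
      by_contra hne
      exact h _ (@isOpen_interior ℝ τ _) (nonempty_iff_ne_empty.2 hne)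
        (Metric.isBounded_closedBall.subset (@interior_subset ℝ τ _))
    have hU := isMeagre_iUnion hn
    rwa [Metric.iUnion_closedBall_nat] at hU
end

section
/- Let τ ∈ 𝓛. Then C(τ) is a closed subset of the Euclidean space ℝ; moreover, C(τ) is closed and meager in the space (ℝ, τ). -/
/-!
The key point is that a `τ`-open set `V` contained in a Euclidean compact set `K` consists of points
where `τ` is not coarse: a Euclidean compact set is `τ`-compact, hence `τ`-closed because `τ` is
Hausdorff, so for a Euclidean open `W ∋ x` with `x ∈ V` the set `V \ (K \ W) ⊆ W` is a
`τ`-open neighborhood of `x` (`nhds_eq_of_isOpen_of_subset_compact`).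

If `τ` is not coarse at `a`, then `[a - 1, a + 1]` is a `τ`-neighborhood of `a`; its `τ`-interior is
such a `V`, so it misses `C(τ)`. Hence `C(τ)` is `τ`-closed, and a fortiori Euclidean closed.
For meagerness, `C(τ)` is the union of the sets `C(τ) ∩ [-n, n]`. Each is `τ`-closed, and its
`τ`-interior is again such a `V`, hence disjoint from `C(τ)` and therefore empty.
-/

open Topology Set

/-- A Euclidean compact set is closed for every topology in `𝓛`. -/
theorem isClosed_of_eta_compact {τ : TopologicalSpace ℝ} (hτ : InL τ) {K : Set ℝ}
    (hK : @IsCompact ℝ eta K) : IsClosed[τ] K := by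
  have hcont : @Continuous ℝ ℝ eta τ id := @Continuous.mk ℝ ℝ eta τ id hτ.1
  have hc : @IsCompact ℝ τ (id '' K) := @IsCompact.image ℝ ℝ eta τ K id hK hcont
  rw [image_id] at hc
  exact @IsCompact.isClosed ℝ τ hτ.2 K hc

/-- At every point of a `τ`-open set that lies in a Euclidean compact set, `τ` is not coarse. -/
theorem nhds_eq_of_isOpen_of_subset_compact {τ : TopologicalSpace ℝ} (hτ : InL τ) {V K : Set ℝ}
    (hV : IsOpen[τ] V) (hK : @IsCompact ℝ eta K) (hVK : V ⊆ K) {x : ℝ} (hx : x ∈ V) :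
    @nhds ℝ τ x = @nhds ℝ eta x := by
  apply le_antisymm
  · intro s hs
    obtain ⟨W, hWs, hWo, hxW⟩ := (@mem_nhds_iff ℝ eta x s).1 hs
    have hKW : IsClosed[τ] (K \ W) :=
      isClosed_of_eta_compact hτ (@IsCompact.diff ℝ eta K W hK hWo)
    refine (@mem_nhds_iff ℝ τ x s).2 ⟨V \ (K \ W), ?_, @IsOpen.sdiff ℝ _ _ τ hV hKW, hx, ?_⟩
    · rintro y ⟨hyV, hy⟩
      by_contra hys
      exact hy ⟨hVK hyV, fun hyW => hys (hWs hyW)⟩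
    · exact fun h => h.2 hxW
  · intro s hs
    obtain ⟨W, hWs, hWo, hxW⟩ := (@mem_nhds_iff ℝ τ x s).1 hs
    exact (@mem_nhds_iff ℝ eta x s).2 ⟨W, hWs, hτ.1 W hWo, hxW⟩

theorem eta_isCompact_Icc (a b : ℝ) : @IsCompact ℝ eta (Icc a b) := by
  unfold eta
  exact isCompact_Icc

theorem eta_Icc_mem_nhds (a : ℝ) : Icc (a - 1) (a + 1) ∈ @nhds ℝ eta a := by
  unfold eta
  exact Icc_mem_nhds (by linarith) (by linarith)

theorem isClosed_Cset {τ : TopologicalSpace ℝ} (hτ : InL τ) : IsClosed[τ] (Cset τ) := by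
  refine (@isOpen_compl_iff ℝ (Cset τ) τ).1 ?_
  refine (@isOpen_iff_mem_nhds ℝ τ _).2 fun a ha => ?_
  have hnhds : @nhds ℝ τ a = @nhds ℝ eta a := not_not.1 ha
  have hmem : Icc (a - 1) (a + 1) ∈ @nhds ℝ τ a := hnhds ▸ eta_Icc_mem_nhds a
  obtain ⟨V, hVK, hVo, haV⟩ := (@mem_nhds_iff ℝ τ a _).1 hmem
  exact (@mem_nhds_iff ℝ τ a _).2 ⟨V, fun x hx => not_not.2
    (nhds_eq_of_isOpen_of_subset_compact hτ hVo (eta_isCompact_Icc _ _) hVK hx), hVo, haV⟩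

/-- Closedness for the Euclidean topology, which is finer than `τ`. -/
theorem eta_isClosed_Cset {τ : TopologicalSpace ℝ} (hτ : InL τ) : IsClosed[eta] (Cset τ) :=
  (@isOpen_compl_iff ℝ (Cset τ) eta).1
    (hτ.1 _ ((@isOpen_compl_iff ℝ (Cset τ) τ).2 (isClosed_Cset hτ)))

theorem isNowhereDense_Cset_inter_Icc {τ : TopologicalSpace ℝ} (hτ : InL τ) (a b : ℝ) :
    @IsNowhereDense ℝ τ (Cset τ ∩ Icc a b) := by
  have hclosed : IsClosed[τ] (Cset τ ∩ Icc a b) := @IsClosed.inter ℝ _ _ τ (isClosed_Cset hτ)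
    (isClosed_of_eta_compact hτ (eta_isCompact_Icc a b))
  refine (@IsClosed.isNowhereDense_iff ℝ τ _ hclosed).2 (eq_empty_iff_forall_notMem.2 ?_)
  intro x hx
  have hsub := @interior_subset ℝ τ (Cset τ ∩ Icc a b)
  exact (hsub hx).1 (nhds_eq_of_isOpen_of_subset_compact hτ (@isOpen_interior ℝ τ _)
    (eta_isCompact_Icc a b) (fun y hy => (hsub hy).2) hx)

theorem isMeagre_Cset {τ : TopologicalSpace ℝ} (hτ : InL τ) : @IsMeagre ℝ τ (Cset τ) := by
  have hcover : Cset τ = ⋃ n : ℕ, Cset τ ∩ Icc (-(n : ℝ)) n := by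
    ext x
    simp only [mem_iUnion, mem_inter_iff, exists_and_left, iff_self_and]
    intro _
    obtain ⟨n, hn⟩ := exists_nat_ge |x|
    exact ⟨n, abs_le.1 hn⟩
  rw [hcover]
  exact @isMeagre_iUnion ℝ ℕ τ _ _ fun n =>
    @IsNowhereDense.isMeagre ℝ τ _ (isNowhereDense_Cset_inter_Icc hτ _ _)

/-- For τ ∈ 𝓛, C(τ) is closed in the Euclidean space ℝ, and it is
closed and meager in the space (ℝ, τ). -/
theorem statement_2 (τ : TopologicalSpace ℝ) (hτ : InL τ) :
    IsClosed (Cset τ) ∧ IsClosed[τ] (Cset τ) ∧ @IsMeagre ℝ τ (Cset τ) := by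
  -- The binder `τ` is a local instance, so the first conjunct also elaborates to closedness for `τ`;
  -- the Euclidean version is `eta_isClosed_Cset`.
  exact ⟨isClosed_Cset hτ, isClosed_Cset hτ, isMeagre_Cset hτ⟩
end

section
/- For every z ∈ ℝ there exists a topology τ_z ∈ 𝓛 with C(τ_z) = (-∞, z] such that each space (ℝ, τ_z) is completely metrizable and all the spaces (ℝ, τ_z), z ∈ ℝ, are homeomorphic to one another. -/
/-!
The topologies `τ z` are pulled back from `ℝ³` along a continuous injection with closed range.
The curve `curve` maps `(-∞, 0]` identically onto the ray `(-∞, 0] × {(0, 0)}`. For `s > 0` its last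
two coordinates trace a loop of the folium of Descartes, `(s / (1 + s³), s² / (1 + s³))`, which
leaves the origin at `s = 0` and returns to it as `s → ∞`, while the first coordinate
`-s sin² s` takes every value in `(-∞, 0]` at arbitrarily large `s`.

So every point of the ray is a limit of points of the curve with parameter tending to `∞`
(`exists_tendsto_curve`), which makes the induced topology coarse there. At points with parameter
`s > 0` the quotient of the last two coordinates recovers `s` continuously, so the induced topology
is Euclidean there (`comap_nhds_curve`). The same quotient shows that the range is closed
(`isClosed_range_curve`), hence the metric pulled back from `ℝ³` is complete.
Translating by `z` moves the set of coarse points to `(-∞, z]` and gives homeomorphic spaces.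
-/

open Topology Set

open Filter

/-- The injection `ℝ → ℝ³` equal to `t ↦ (t, 0, 0)` for `t ≤ 0` and to
`t ↦ (-t sin² t, t / (1 + t³), t² / (1 + t³))` for `t ≥ 0`. -/
noncomputable def curve (t : ℝ) : ℝ × ℝ × ℝ :=
  (min t 0 - max t 0 * Real.sin (max t 0) ^ 2,
    max t 0 / (1 + max t 0 ^ 3), max t 0 ^ 2 / (1 + max t 0 ^ 3))

lemma one_add_max_pos (t : ℝ) : 0 < 1 + max t 0 ^ 3 := by
  have : 0 ≤ max t 0 := le_max_right _ _
  positivity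

lemma continuous_curve : Continuous curve := by
  unfold curve
  have h : ∀ t : ℝ, 1 + max t 0 ^ 3 ≠ 0 := fun t => (one_add_max_pos t).ne'
  refine Continuous.prodMk (by fun_prop) (Continuous.prodMk ?_ ?_)
  · exact Continuous.div (by fun_prop) (by fun_prop) h
  · exact Continuous.div (by fun_prop) (by fun_prop) h

lemma curve_of_nonpos {t : ℝ} (ht : t ≤ 0) : curve t = (t, 0, 0) := by
  simp [curve, ht]

/-- The quotient of the last two coordinates recovers the parameter where it is positive
(and is `0 / 0 = 0` where it is not). -/
lemma curve_ratio (t : ℝ) : (curve t).2.2 / (curve t).2.1 = max t 0 := by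
  have h := (one_add_max_pos t).ne'
  simp only [curve]
  rcases (le_max_right t 0).eq_or_lt with h0 | h0
  · simp [← h0]
  · have := h0.ne'
    field_simp

lemma curve_injective : Function.Injective curve := by
  intro s t h
  have hm : max s 0 = max t 0 := by rw [← curve_ratio, ← curve_ratio, h]
  have h1 : min s 0 = min t 0 := by
    have := congrArg Prod.fst h
    simp only [curve, hm] at this
    linarith
  have hs := min_add_max s 0
  have ht := min_add_max t 0
  linarith

/-- Convergence of points of the curve to a point off the plane where the second coordinate
vanishes forces convergence of the parameters. -/
lemma tendsto_param {ι : Type*} {l : Filter ι} {u : ι → ℝ} {p : ℝ × ℝ × ℝ}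
    (hp : 0 < p.2.1) (h : Tendsto (fun i => curve (u i)) l (𝓝 p)) :
    Tendsto u l (𝓝 (p.2.2 / p.2.1)) := by
  have h1 : Tendsto (fun i => (curve (u i)).2.1) l (𝓝 p.2.1) := h.snd_nhds.fst_nhds
  have h2 : Tendsto (fun i => (curve (u i)).2.2) l (𝓝 p.2.2) := h.snd_nhds.snd_nhds
  have h3 := h2.div h1 hp.ne'
  refine h3.congr' ?_
  filter_upwards [h1.eventually (lt_mem_nhds hp)] with i hi
  have : 0 < u i := by
    by_contra! hu
    simp [curve_of_nonpos hu] at hi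
  simp only [Pi.div_apply, curve_ratio, max_eq_left this.le]

lemma comap_nhds_curve {a : ℝ} (ha : 0 < a) : comap curve (𝓝 (curve a)) = 𝓝 a := by
  apply le_antisymm
  · have hp : 0 < (curve a).2.1 := by
      have := one_add_max_pos a
      have : 0 < max a 0 := lt_max_of_lt_left ha
      simp only [curve]
      positivity
    have := tendsto_param (u := id) hp (tendsto_comap (f := curve) (x := 𝓝 (curve a)))
    rwa [curve_ratio, max_eq_left ha.le] at this
  · exact continuous_curve.continuousAt.le_comap

lemma isClosed_range_curve : IsClosed (range curve) := by
  apply IsSeqClosed.isClosed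
  intro v p hv hp
  choose u hu using hv
  obtain rfl : (fun n => curve (u n)) = v := funext hu
  -- These relations hold along the curve, hence at its limit points.
  have hS : IsClosed {q : ℝ × ℝ × ℝ | q.1 ≤ 0 ∧ 0 ≤ q.2.1 ∧
      q.2.1 ^ 3 + q.2.2 ^ 3 = q.2.1 * q.2.2} := by
    rw [ofPred_and, ofPred_and]
    refine IsClosed.inter ?_ (IsClosed.inter ?_ ?_)
    · exact isClosed_le (by fun_prop) (by fun_prop)
    · exact isClosed_le (by fun_prop) (by fun_prop)
    · exact isClosed_eq (by fun_prop) (by fun_prop)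
  obtain ⟨hx, hy, hyw⟩ := hS.mem_of_tendsto hp (Eventually.of_forall fun n => by
    have h1 := one_add_max_pos (u n)
    have h2 : 0 ≤ max (u n) 0 := le_max_right _ _
    refine ⟨?_, ?_, ?_⟩
    · have h3 : min (u n) 0 ≤ 0 := min_le_right _ _
      have : 0 ≤ max (u n) 0 * Real.sin (max (u n) 0) ^ 2 := by positivity
      simp only [curve]
      linarith
    · simp only [curve]
      positivity
    · simp only [curve]
      field_simp)
  rcases hy.eq_or_lt with h0 | h0
  · have hw : p.2.2 = 0 := by
      rw [← h0] at hyw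
      simpa using hyw
    exact ⟨p.1, (curve_of_nonpos hx).trans (Prod.ext rfl (Prod.ext h0 hw.symm))⟩
  · exact ⟨_, tendsto_nhds_unique (continuous_curve.continuousAt.tendsto.comp
      (tendsto_param h0 hp)) hp⟩

/-- The function `t sin² t` takes each nonnegative value at arbitrarily large arguments. -/
lemma exists_large_mul_sin_sq {b : ℝ} (hb : 0 ≤ b) (n : ℕ) :
    ∃ t : ℝ, (n : ℝ) ≤ t ∧ t * Real.sin t ^ 2 = b := by
  obtain ⟨k, hk⟩ := exists_nat_ge (b + n)
  have hpi := Real.pi_gt_three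
  have hkn : (k : ℝ) ≤ k * Real.pi := by nlinarith [(Nat.cast_nonneg k : (0 : ℝ) ≤ k)]
  have hle : (k : ℝ) * Real.pi ≤ k * Real.pi + Real.pi / 2 := by linarith
  have hiv := intermediate_value_Icc hle
    (f := fun t => t * Real.sin t ^ 2) (by fun_prop)
  have hsin : Real.sin (k * Real.pi + Real.pi / 2) ^ 2 = 1 := by
    rw [Real.sin_add_pi_div_two, Real.cos_nat_mul_pi, ← pow_mul, mul_comm, pow_mul]
    simp
  obtain ⟨t, ht, htb⟩ := hiv (show b ∈ _ by
    simp only [hsin, Real.sin_nat_mul_pi]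
    have : (0 : ℝ) ≤ n := Nat.cast_nonneg n
    constructor <;> linarith)
  exact ⟨t, by linarith [ht.1], htb⟩

lemma exists_tendsto_curve {a : ℝ} (ha : a ≤ 0) :
    ∃ u : ℕ → ℝ, Tendsto u atTop atTop ∧ Tendsto (fun n => curve (u n)) atTop (𝓝 (curve a)) := by
  choose u hu hua using exists_large_mul_sin_sq (neg_nonneg.2 ha)
  have hu' : Tendsto u atTop atTop := tendsto_atTop_mono hu tendsto_natCast_atTop_atTop
  refine ⟨u, hu', ?_⟩
  have hinv := tendsto_inv_atTop_zero.comp hu'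
  have hpos : ∀ᶠ n in atTop, 0 < u n := hu'.eventually_gt_atTop 0
  rw [curve_of_nonpos ha]
  have e : ∀ n, max (u n) 0 = u n := fun n =>
    max_eq_left ((Nat.cast_nonneg n).trans (hu n))
  have e' : ∀ n, min (u n) 0 = 0 := fun n =>
    min_eq_right ((Nat.cast_nonneg n).trans (hu n))
  simp only [curve, e, e', hua, zero_sub, neg_neg]
  refine tendsto_const_nhds.prodMk_nhds (Tendsto.prodMk_nhds ?_ ?_)
  -- Both loop coordinates are at most `1 / u n` once `u n ≥ 1`.
  · refine tendsto_of_tendsto_of_tendsto_of_le_of_le' tendsto_const_nhds hinv ?_ ?_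
    · filter_upwards [hpos] with n hn
      positivity
    · filter_upwards [hu'.eventually_ge_atTop 1] with n hn
      have h0 : 0 < u n := by linarith
      simp only [Function.comp]
      rw [inv_eq_one_div, div_le_div_iff₀ (by positivity) h0]
      nlinarith [mul_nonneg (sq_nonneg (u n)) (sub_nonneg.2 hn)]
  · refine tendsto_of_tendsto_of_tendsto_of_le_of_le' tendsto_const_nhds hinv ?_ ?_
    · filter_upwards [hpos] with n hn
      positivity
    · filter_upwards [hpos] with n hn
      simp only [Function.comp]
      rw [inv_eq_one_div, div_le_div_iff₀ (by positivity) hn]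
      nlinarith

/-- The curve reparametrized so that `(-∞, z]` is the part mapped to the limit ray. -/
noncomputable def shiftedCurve (z x : ℝ) : ℝ × ℝ × ℝ := curve (x - z)

lemma shiftedCurve_injective (z : ℝ) : Function.Injective (shiftedCurve z) :=
  curve_injective.comp (sub_left_injective)

/-- The topology on `ℝ` whose coarse points are exactly those of `(-∞, z]`. -/
@[reducible]
noncomputable def curveTopology (z : ℝ) : TopologicalSpace ℝ :=
  TopologicalSpace.induced (shiftedCurve z) inferInstance

lemma coarseAt_curveTopology_iff (z a : ℝ) : CoarseAt (curveTopology z) a ↔ a ≤ z := by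
  have hn : @nhds ℝ (curveTopology z) a = comap (shiftedCurve z) (𝓝 (curve (a - z))) :=
    nhds_induced _ _
  have hc : comap (shiftedCurve z) (𝓝 (curve (a - z)))
      = comap (fun x => x - z) (comap curve (𝓝 (curve (a - z)))) := by
    rw [comap_comap]
    rfl
  have he : @nhds ℝ eta a = 𝓝 a := rfl
  rw [CoarseAt, hn, he]
  constructor
  · intro h
    by_contra! ha
    apply h
    rw [hc, comap_nhds_curve (sub_pos.2 ha)]
    exact (Homeomorph.subRight z).comap_nhds_eq (a - z) |>.trans (by simp)
  · intro ha h
    obtain ⟨u, hu, hua⟩ := exists_tendsto_curve (sub_nonpos.2 ha)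
    have h1 : Tendsto (fun n => u n + z) atTop (𝓝 a) := by
      rw [← h, tendsto_comap_iff]
      refine hua.congr fun n => ?_
      simp [shiftedCurve]
    exact not_tendsto_nhds_of_tendsto_atTop (tendsto_atTop_add_const_right _ z hu) a h1

lemma completelyMetrizable_curveTopology (z : ℝ) : CompletelyMetrizable (curveTopology z) := by
  refine ⟨MetricSpace.induced (shiftedCurve z) (shiftedCurve_injective z) inferInstance, rfl, ?_⟩
  -- The uniform structures are explicit: a local instance on `ℝ` would also change that of `ℝ³`.
  have hi : @IsUniformInducing _ _ (UniformSpace.comap (shiftedCurve z) inferInstance) _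
      (shiftedCurve z) := @IsUniformInducing.mk _ _ (_) _ _ rfl
  refine @IsUniformInducing.completeSpace _ _ (_) _ _ hi ?_
  have hr : range (shiftedCurve z) = range curve :=
    (Equiv.subRight z).surjective.range_comp curve
  rw [hr]
  exact isClosed_range_curve.isComplete

lemma inL_curveTopology (z : ℝ) : InL (curveTopology z) := by
  constructor
  · have hc : Continuous (shiftedCurve z) := continuous_curve.comp (continuous_sub_right z)
    exact fun U hU => continuous_iff_le_induced.1 hc U hU
  · exact @T2Space.of_injective_continuous _ _ (curveTopology z) _ _ _
      (shiftedCurve_injective z) continuous_induced_dom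

/-- Translation is a homeomorphism because it intertwines the two shifted curves. -/
lemma continuous_translation (z w : ℝ) :
    @Continuous ℝ ℝ (curveTopology z) (curveTopology w) (fun x => x - z + w) := by
  let _ := curveTopology z
  refine continuous_induced_rng.2 ?_
  have : shiftedCurve w ∘ (fun x => x - z + w) = shiftedCurve z := by
    funext x
    simp [shiftedCurve]
  rw [this]
  exact continuous_induced_dom

/-- For every z ∈ ℝ there is τ_z ∈ 𝓛 with C(τ_z) = (-∞, z], each
(ℝ, τ_z) completely metrizable, and all the spaces (ℝ, τ_z) homeomorphic. -/
theorem statement_4 :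
    ∃ τ : ℝ → TopologicalSpace ℝ,
      (∀ z : ℝ, InL (τ z) ∧ Cset (τ z) = Set.Iic z ∧ CompletelyMetrizable (τ z)) ∧
      ∀ z w : ℝ, Nonempty (@Homeomorph ℝ ℝ (τ z) (τ w)) := by
  refine ⟨curveTopology, fun z => ⟨inL_curveTopology z, ?_,
    completelyMetrizable_curveTopology z⟩, fun z w => ?_⟩
  · ext a
    exact coarseAt_curveTopology_iff z a
  · exact ⟨@Homeomorph.mk ℝ ℝ (curveTopology z) (curveTopology w)
      ⟨fun x => x - z + w, fun x => x - w + z, fun x => by ring, fun x => by ring⟩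
      (continuous_translation z w) (continuous_translation w z)⟩
end

section
/- Let z ∈ ℝ and τ ∈ 𝓛 with C(τ) = {z}. Then: (i) the space (ℝ, τ) is second countable if and only if the point z has a countable neighborhood basis in (ℝ, τ); (ii) the space (ℝ, τ) is completely normal if and only if it is regular. -/
/-!
Write `X` for `(ℝ, τ)`; the identity `ℝ → X` is a continuous surjection from a second countable space.

For (i), away from the coarse point `z` the identity also maps neighborhood filters onto
neighborhood filters, so a Euclidean basic open set that avoids `z` is `τ`-open. The countably many
such sets, together with the `τ`-interiors of a countable neighborhood basis of `z`, form a
countable basis of `X` (`secondCountable_of_nhds_eq_map`).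

For (ii), every subset of `X` is a continuous image of a subset of `ℝ`, hence Lindelöf. A regular
Lindelöf space is normal, so if `X` is regular then all its subspaces are normal
(`completelyNormal_of_continuous_surjective`). Conversely, a completely normal Hausdorff space
is regular.
-/

open Topology Set

/-- If a continuous surjection from a second countable space is open at every point outside the
fibre over `z`, then countability of the character at `z` gives second countability. -/
theorem secondCountable_of_nhds_eq_map {Y X : Type*} [TopologicalSpace Y]
    [SecondCountableTopology Y] [TopologicalSpace X] [T1Space X] {f : Y → X}
    (hf : Continuous f) (hs : Function.Surjective f) (z : X)
    (hz : ∀ y, f y ≠ z → 𝓝 (f y) = Filter.map f (𝓝 y)) (hc : (𝓝 z).IsCountablyGenerated) :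
    SecondCountableTopology X := by
  obtain ⟨V, hV⟩ := (𝓝 z).exists_antitone_basis
  let B := TopologicalSpace.countableBasis Y
  have hB := TopologicalSpace.isBasis_countableBasis Y
  let S : Set (Set X) := (fun u => f '' u) '' {u ∈ B | ∀ y ∈ u, f y ≠ z} ∪
    range fun n => interior (V n)
  have hS : S.Countable :=
    (((TopologicalSpace.countable_countableBasis Y).mono (sep_subset _ _)).image _).union
      (countable_range _)
  refine (TopologicalSpace.isTopologicalBasis_of_isOpen_of_nhds (s := S)
    ?_ ?_).secondCountableTopology hS
  · rintro _ (⟨u, ⟨hu, huz⟩, rfl⟩ | ⟨n, rfl⟩)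
    · refine isOpen_iff_mem_nhds.2 ?_
      rintro _ ⟨y, hy, rfl⟩
      rw [hz y (huz y hy)]
      exact Filter.image_mem_map ((hB.isOpen hu).mem_nhds hy)
    · exact isOpen_interior
  · intro x U hxU hU
    by_cases hx : x = z
    · subst hx
      obtain ⟨n, -, hn⟩ := hV.1.mem_iff.1 (hU.mem_nhds hxU)
      exact ⟨_, Or.inr ⟨n, rfl⟩, mem_interior_iff_mem_nhds.2 (hV.1.mem_of_mem trivial),
        interior_subset.trans hn⟩
    · obtain ⟨y, rfl⟩ := hs x
      obtain ⟨u, hu, hyu, huU⟩ := hB.exists_subset_of_mem_open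
        (show y ∈ f ⁻¹' (U ∩ {z}ᶜ) from ⟨hxU, hx⟩)
        ((hU.inter isOpen_compl_singleton).preimage hf)
      exact ⟨_, Or.inl ⟨u, ⟨hu, fun y' hy' => (huU hy').2⟩, rfl⟩, mem_image_of_mem f hyu,
        image_subset_iff.2 fun y' hy' => (huU hy').1⟩

theorem completelyNormal_of_continuous_surjective {Y X : Type*} [TopologicalSpace Y]
    [SecondCountableTopology Y] [TopologicalSpace X] [RegularSpace X] {f : Y → X}
    (hf : Continuous f) (hs : Function.Surjective f) : CompletelyNormalSpace X := by
  refine CompletelyNormalSpace.of_forall_normalSpace fun s => ?_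
  have hL : IsLindelof s := by
    rw [← image_preimage_eq s hs]
    exact (HereditarilyLindelofSpace.isLindelof (f ⁻¹' s)).image hf
  have : LindelofSpace s := isLindelof_iff_lindelofSpace.1 hL
  infer_instance

theorem secondCountable_eta : @SecondCountableTopology ℝ eta :=
  inferInstanceAs (SecondCountableTopology ℝ)

theorem nhds_isCountablyGenerated {X : Type*} [TopologicalSpace X] [SecondCountableTopology X]
    (x : X) : (𝓝 x).IsCountablyGenerated :=
  inferInstance

/-- For z ∈ ℝ and τ ∈ 𝓛 with C(τ) = {z}: (i) (ℝ, τ) is second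
countable iff z has a countable neighborhood basis in (ℝ, τ); (ii) (ℝ, τ) is
completely normal iff it is regular. -/
theorem statement_5 (z : ℝ) (τ : TopologicalSpace ℝ) (hτ : InL τ)
    (hC : Cset τ = {z}) :
    (@SecondCountableTopology ℝ τ ↔ (@nhds ℝ τ z).IsCountablyGenerated) ∧
    (@CompletelyNormalSpace ℝ τ ↔ @RegularSpace ℝ τ) := by
  obtain ⟨hle, h2⟩ := hτ
  have hsc := secondCountable_eta
  have hcont : @Continuous ℝ ℝ eta τ id :=
    @Continuous.mk ℝ ℝ eta τ id fun U hU => hle U hU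
  have h1 : @T1Space ℝ τ := @T2Space.t1Space ℝ τ h2
  refine ⟨⟨fun h => ?_, fun h => ?_⟩, ⟨fun h => ?_, fun h => ?_⟩⟩
  · exact nhds_isCountablyGenerated z
  · refine @secondCountable_of_nhds_eq_map ℝ ℝ eta hsc τ h1 id hcont
      Function.surjective_id z (fun y hy => ?_) h
    rw [Filter.map_id]
    by_contra hne
    have hmem : y ∈ Cset τ := hne
    rw [hC] at hmem
    exact hy hmem
  · infer_instance
  · exact @completelyNormal_of_continuous_surjective ℝ ℝ eta hsc τ h id hcont
      Function.surjective_id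
end

section
/- There exists a family 𝒯 ⊆ 𝓛 with |𝒯| = 2^c such that for each τ ∈ 𝒯 the space (ℝ, τ) is a completely normal Baire space, and for distinct τ, τ' ∈ 𝒯 the spaces (ℝ, τ) and (ℝ, τ') are not homeomorphic. -/
/-! The topologies are obtained from the Euclidean one by coarsening it only at `0`: for a filter
`F ≤ cofinite` on `ℕ`, let `tau F` consist of the Euclidean open sets `U` such that `0 ∈ U` implies
`n + 1 ∈ U` for `F`-almost all `n`. Thus `0` is made a limit of the points `n + 1` along `F`.

*Separation and Baire.* On `ℝ \ {0}` nothing changes, so Baire's theorem is inherited. Given a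
`tau F`-neighbourhood of `0`, normality of `ℝ` applied to the Euclidean closed set of those points
among `0, 1, 2, …` that it contains yields a smaller neighbourhood whose closure stays inside
(`exists_shrink`). This regularity at `0`, combined with complete normality of the Euclidean line,
gives the Hausdorff property and complete normality.

*Many topologies.* An almost disjoint family `branch x`, `x : Set ℕ`, of infinite subsets of `ℕ`
gives for every `X : Set (Set ℕ)` the filter `famFilter X` generated by the cofinite sets and the
complements of `branch x`, `x ∈ X`. These `2 ^ 𝔠` filters are distinct, and so are their topologies.

*Few homeomorphisms.* A homeomorphism `h` from `tau F` to `tau G` is Euclidean continuous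
away from `0` and `h⁻¹ 0`, so it is determined by `h⁻¹ 0` and its restriction to `ℚ`. It
follows that every homeomorphism class has at most `𝔠` members, and there are `2 ^ 𝔠` classes. -/

open Topology Set

/-! ### The topologies -/

/-- The Euclidean topology coarsened at `0`: an open set containing `0` must also contain
`n + 1` for `F`-almost all `n`. -/
def tau (F : Filter ℕ) : TopologicalSpace ℝ where
  IsOpen U := IsOpen U ∧ (0 ∈ U → ∀ᶠ n in F, ((n + 1 : ℕ) : ℝ) ∈ U)
  isOpen_univ := ⟨isOpen_univ, fun _ => by simp⟩
  isOpen_inter U V hU hV := ⟨hU.1.inter hV.1, fun h => (hU.2 h.1).and (hV.2 h.2)⟩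
  isOpen_sUnion S hS := by
    refine ⟨isOpen_sUnion fun U hU => (hS U hU).1, ?_⟩
    rintro ⟨U, hU, h0⟩
    exact ((hS U hU).2 h0).mono fun n hn => ⟨U, hU, hn⟩

lemma tau_isOpen_of_notMem {F : Filter ℕ} {U : Set ℝ} (hU : IsOpen U) (h : (0 : ℝ) ∉ U) :
    IsOpen[tau F] U := ⟨hU, fun h0 => absurd h0 h⟩

lemma tau_isOpen_diff (F : Filter ℕ) {U : Set ℝ} (hU : IsOpen U) :
    IsOpen[tau F] (U \ {0}) :=
  tau_isOpen_of_notMem (hU.sdiff isClosed_singleton) (by simp)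

/-- Regularity of `tau F` at `0`. -/
lemma exists_shrink {F : Filter ℕ} {W : Set ℝ} (hW : IsOpen[tau F] W) (h0 : (0 : ℝ) ∈ W) :
    ∃ V C : Set ℝ, IsOpen[tau F] V ∧ IsOpen[tau F] Cᶜ ∧ (0 : ℝ) ∈ V ∧ V ⊆ C ∧ C ⊆ W := by
  have hK : IsClosed ((fun n : ℕ => (n : ℝ)) '' {n | (n : ℝ) ∈ W}) :=
    Nat.isClosedEmbedding_coe_real.isClosedMap _ (isClosed_discrete _)
  obtain ⟨V, hV, hKV, hVW⟩ := normal_exists_closure_subset hK hW.1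
    (by rintro _ ⟨n, hn, rfl⟩; exact hn)
  have h0V : (0 : ℝ) ∈ V := hKV ⟨0, by simpa using h0, by simp⟩
  refine ⟨V, closure V, ⟨hV, fun _ => ?_⟩, ?_, h0V, subset_closure, hVW⟩
  · exact (hW.2 h0).mono fun n hn => hKV ⟨n + 1, hn, rfl⟩
  · exact tau_isOpen_of_notMem isClosed_closure.isOpen_compl fun h => h (subset_closure h0V)

lemma tau_coarser (F : Filter ℕ) : Coarser (tau F) eta := fun _ hU => hU.1

lemma tau_t2 {F : Filter ℕ} (hF : F ≤ Filter.cofinite) : @T2Space ℝ (tau F) := by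
  have key : ∀ y : ℝ, y ≠ 0 → ∃ U V : Set ℝ, IsOpen[tau F] U ∧ IsOpen[tau F] V ∧
      (0 : ℝ) ∈ U ∧ y ∈ V ∧ Disjoint U V := by
    intro y hy
    have hopen : IsOpen[tau F] ({y}ᶜ : Set ℝ) := by
      refine ⟨isOpen_compl_singleton, fun _ => hF ?_⟩
      have hfin : {n : ℕ | ((n + 1 : ℕ) : ℝ) = y}.Finite := by
        apply Set.Subsingleton.finite
        intro a ha b hb
        have : ((a + 1 : ℕ) : ℝ) = ((b + 1 : ℕ) : ℝ) := Eq.trans ha (Eq.symm hb)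
        have := Nat.cast_injective this
        omega
      exact hfin.compl_mem_cofinite
    obtain ⟨V, C, hV, hC, h0, hVC, hCy⟩ := exists_shrink hopen (fun h => hy h.symm)
    exact ⟨V, Cᶜ, hV, hC, h0, fun h => hCy h rfl,
      Set.disjoint_left.2 fun x hx hx' => hx' (hVC hx)⟩
  refine @T2Space.mk ℝ (tau F) fun x y hxy => ?_
  by_cases hx : x = 0
  · subst hx
    exact key y (Ne.symm hxy)
  by_cases hy : y = 0
  · subst hy
    obtain ⟨U, V, hU, hV, h0, hx, hd⟩ := key x hx
    exact ⟨V, U, hV, hU, hx, h0, hd.symm⟩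
  obtain ⟨U, V, hU, hV, hxU, hyV, hd⟩ := t2_separation hxy
  exact ⟨U \ {0}, V \ {0}, tau_isOpen_diff F hU, tau_isOpen_diff F hV, ⟨hxU, hx⟩, ⟨hyV, hy⟩,
    hd.mono sdiff_subset sdiff_subset⟩

/-- Separated sets, described by open sets `P ⊇ A` and `Q ⊇ B` missing the other set, have
disjoint `tau F`-neighbourhoods, provided the point `0` is not in `B`. -/
lemma tau_separate {F : Filter ℕ} {A B P Q : Set ℝ} (hP : IsOpen[tau F] P) (hQ : IsOpen[tau F] Q)
    (hAP : A ⊆ P) (hBQ : B ⊆ Q) (hPB : Disjoint P B) (hAQ : Disjoint A Q) (h0 : (0 : ℝ) ∉ B) :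
    ∃ U V : Set ℝ, IsOpen[tau F] U ∧ IsOpen[tau F] V ∧ A ⊆ U ∧ B ⊆ V ∧ Disjoint U V := by
  have h1 : Disjoint (closure A) B :=
    (hAQ.closure_left hQ.1).mono_right hBQ
  have h2 : Disjoint A (closure B) :=
    (hPB.closure_right hP.1).mono_left hAP
  obtain ⟨U, V, hU, hV, hAU, hBV, hd⟩ :=
    separatedNhds_iff_disjoint.2 (CompletelyNormalSpace.completely_normal h1 h2)
  have hBV' : B ⊆ V \ {0} := fun x hx => ⟨hBV hx, fun h => h0 (h ▸ hx)⟩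
  by_cases hA : (0 : ℝ) ∈ A
  · obtain ⟨W, C, hW, hC, h0W, hWC, hCP⟩ := exists_shrink hP (hAP hA)
    refine ⟨U \ {0} ∪ W, (V \ {0}) ∩ Cᶜ, @IsOpen.union _ _ _ (tau F) (tau_isOpen_diff F hU) hW,
      @IsOpen.inter _ (tau F) _ _ (tau_isOpen_diff F hV) hC, ?_, ?_, ?_⟩
    · intro x hx
      by_cases hx0 : x = 0
      · exact Or.inr (hx0 ▸ h0W)
      · exact Or.inl ⟨hAU hx, hx0⟩
    · exact fun x hx => ⟨hBV' hx, fun hxC => Set.disjoint_left.1 hPB (hCP hxC) hx⟩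
    · rw [Set.disjoint_left]
      rintro x (hx | hx) ⟨hxV, hxC⟩
      · exact Set.disjoint_left.1 hd hx.1 hxV.1
      · exact hxC (hWC hx)
  · exact ⟨U \ {0}, V \ {0}, tau_isOpen_diff F hU, tau_isOpen_diff F hV,
      fun x hx => ⟨hAU hx, fun h => hA (h ▸ hx)⟩, hBV', hd.mono sdiff_subset sdiff_subset⟩

lemma tau_completelyNormal (F : Filter ℕ) : @CompletelyNormalSpace ℝ (tau F) := by
  refine @CompletelyNormalSpace.mk ℝ (tau F) fun A B h1 h2 => ?_
  refine (@separatedNhds_iff_disjoint ℝ (tau F) A B).1 ?_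
  have hP : IsOpen[tau F] (@closure ℝ (tau F) B)ᶜ := (@isClosed_closure ℝ (tau F) B).isOpen_compl
  have hQ : IsOpen[tau F] (@closure ℝ (tau F) A)ᶜ := (@isClosed_closure ℝ (tau F) A).isOpen_compl
  have hAP : A ⊆ (@closure ℝ (tau F) B)ᶜ := h2.subset_compl_right
  have hBQ : B ⊆ (@closure ℝ (tau F) A)ᶜ := h1.symm.subset_compl_right
  have hPB : Disjoint (@closure ℝ (tau F) B)ᶜ B :=
    disjoint_compl_left.mono_right (@subset_closure ℝ (tau F) B)
  have hAQ : Disjoint A (@closure ℝ (tau F) A)ᶜ :=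
    disjoint_compl_right.mono_left (@subset_closure ℝ (tau F) A)
  by_cases h0 : (0 : ℝ) ∈ B
  · have h0A : (0 : ℝ) ∉ A := fun h => hAP h (@subset_closure ℝ (tau F) B _ h0)
    obtain ⟨U, V, hU, hV, hBU, hAV, hd⟩ :=
      tau_separate hQ hP hBQ hAP hAQ.symm hPB.symm h0A
    exact ⟨V, U, hV, hU, hAV, hBU, hd.symm⟩
  · exact tau_separate hP hQ hAP hBQ hPB hAQ h0

/-- Density can be tested on Euclidean open sets, because removing `0` keeps such a set nonempty
and makes it `tau F`-open. -/
lemma tau_dense_iff (F : Filter ℕ) (S : Set ℝ) : @Dense ℝ (tau F) S ↔ Dense S := by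
  refine (@dense_iff_inter_open ℝ (tau F) S).trans (Iff.trans ?_ dense_iff_inter_open.symm)
  refine ⟨fun h U hU hne => ?_, fun h U hU hne => h U hU.1 hne⟩
  have hne' : (U \ {0}).Nonempty := by
    obtain ⟨x, hx, hx0⟩ := (dense_compl_singleton (0 : ℝ)).inter_open_nonempty U hU hne
    exact ⟨x, hx, hx0⟩
  exact (h _ (tau_isOpen_diff F hU) hne').mono (inter_subset_inter_left _ sdiff_subset)

lemma tau_baire (F : Filter ℕ) : @BaireSpace ℝ (tau F) := by
  refine @BaireSpace.mk ℝ (tau F) fun f ho hd => ?_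
  rw [tau_dense_iff]
  exact dense_iInter_of_isOpen_nat (fun n => (ho n).1) fun n => (tau_dense_iff F _).1 (hd n)

lemma le_of_tau_eq {F G : Filter ℕ} (h : tau F = tau G) : F ≤ G := by
  intro S hS
  -- A Euclidean open set that contains `0` and exactly those `n + 1` with `n ∈ S`.
  let U : Set ℝ := ((fun n : ℕ => ((n : ℕ) : ℝ)) '' ((fun n : ℕ => n + 1) '' Sᶜ))ᶜ
  have hU : IsOpen U :=
    (Nat.isClosedEmbedding_coe_real.isClosedMap _ (isClosed_discrete _)).isOpen_compl
  have h0 : (0 : ℝ) ∈ U := by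
    rintro ⟨_, ⟨n, -, rfl⟩, hn⟩
    exact Nat.succ_ne_zero n (Nat.cast_eq_zero.1 hn)
  have hmem : ∀ n : ℕ, ((n + 1 : ℕ) : ℝ) ∈ U ↔ n ∈ S := by
    intro n
    constructor
    · intro hn
      by_contra hnS
      exact hn ⟨n + 1, ⟨n, hnS, rfl⟩, rfl⟩
    · rintro hn ⟨_, ⟨m, hm, rfl⟩, hmn⟩
      have := Nat.cast_injective (R := ℝ) hmn
      have hmn' : m = n := by simpa using this
      exact hm (hmn' ▸ hn)
  have hG : IsOpen[tau G] U := ⟨hU, fun _ => Filter.mem_of_superset hS fun n hn => (hmem n).2 hn⟩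
  rw [← h] at hG
  exact Filter.mem_of_superset (hG.2 h0) fun n hn => (hmem n).1 hn

lemma tau_injective : Function.Injective tau := fun _ _ h =>
  le_antisymm (le_of_tau_eq h) (le_of_tau_eq h.symm)

/-! ### Many filters -/

/-- The branch of `x : Set ℕ` in the binary tree: the codes of the initial segments
`x ∩ {0, …, k - 1}`, each paired with its length `k`. -/
def branch (x : Set ℕ) : Set ℕ :=
  open Classical in range fun k : ℕ => Encodable.encode (k, (Finset.range k).filter (· ∈ x))

lemma branch_infinite (x : Set ℕ) : (branch x).Infinite := by
  classical
  refine infinite_range_of_injective fun a b h => ?_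
  exact congrArg Prod.fst (Encodable.encode_injective h)

lemma branch_inter_finite {x y : Set ℕ} (hxy : x ≠ y) : (branch x ∩ branch y).Finite := by
  classical
  obtain ⟨i, hi⟩ : ∃ i, ¬ (i ∈ x ↔ i ∈ y) := by
    by_contra! h
    exact hxy (Set.ext h)
  -- Beyond level `i` the two branches have split.
  refine ((finite_Iic i).image
    fun k : ℕ => Encodable.encode (k, (Finset.range k).filter (· ∈ x))).subset ?_
  rintro _ ⟨⟨k, rfl⟩, ⟨l, hl⟩⟩
  have h := Encodable.encode_injective hl
  have h1 : l = k := congrArg Prod.fst h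
  subst h1
  have h2 : (Finset.range l).filter (· ∈ y) = (Finset.range l).filter (· ∈ x) := by
    convert congrArg Prod.snd h
  refine ⟨l, ?_, ?_⟩
  · by_contra hlt
    have hil : i < l := by simpa using hlt
    have := Finset.ext_iff.1 h2 i
    simp only [Finset.mem_filter, Finset.mem_range, hil, true_and] at this
    exact hi this.symm
  · simp

/-- The filter generated by the cofinite sets and the complements of `branch x`, `x ∈ X`. -/
def famFilter (X : Set (Set ℕ)) : Filter ℕ :=
  Filter.cofinite ⊓ ⨅ x ∈ X, Filter.principal (branch x)ᶜ

lemma compl_branch_mem_iff {X : Set (Set ℕ)} {y : Set ℕ} :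
    (branch y)ᶜ ∈ famFilter X ↔ y ∈ X := by
  constructor
  · intro h
    by_contra hy
    -- The cofinite filter traced on `branch y` refines `famFilter X` but is proper.
    have hle : Filter.cofinite ⊓ Filter.principal (branch y) ≤ famFilter X := by
      refine le_inf inf_le_left (le_iInf₂ fun x hx => ?_)
      rw [Filter.le_principal_iff, Filter.mem_inf_principal]
      have hne : y ≠ x := fun e => hy (e ▸ hx)
      refine Filter.mem_of_superset (branch_inter_finite hne).compl_mem_cofinite ?_
      intro n hn hny hnx
      exact hn ⟨hny, hnx⟩
    have h' := hle h
    rw [Filter.mem_inf_principal, Filter.mem_cofinite] at h'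
    refine branch_infinite y (h'.subset ?_)
    intro n hn hc
    exact hc hn hn
  · intro hy
    exact (inf_le_right.trans (iInf₂_le y hy) : famFilter X ≤ _) (Filter.mem_principal_self _)

lemma famFilter_injective : Function.Injective famFilter := fun X Y h => by
  ext y
  rw [← compl_branch_mem_iff (X := X), h, compl_branch_mem_iff]

/-- The topology attached to a set of branches. -/
def famTau (X : Set (Set ℕ)) : TopologicalSpace ℝ := tau (famFilter X)

lemma famTau_injective : Function.Injective famTau := tau_injective.comp famFilter_injective

/-! ### Few homeomorphisms -/

/-- The bijection `e` is a homeomorphism from `tau F` to `tau G`. -/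
def IsHomeo (e : ℝ ≃ ℝ) (F G : Filter ℕ) : Prop :=
  ∀ U : Set ℝ, IsOpen[tau F] (e ⁻¹' U) ↔ IsOpen[tau G] U

/-- The invariant that pins down a homeomorphism between two of the topologies:
the preimage of `0` and the restriction to `ℚ`. -/
def homeoCode (e : ℝ ≃ ℝ) : ℝ × (ℚ → ℝ) := (e.symm 0, fun q => e q)

lemma eq_of_homeoCode_eq {F G G' : Filter ℕ} {h h' : ℝ ≃ ℝ} (hh : IsHomeo h F G)
    (hh' : IsHomeo h' F G') (e : homeoCode h = homeoCode h') : h = h' := by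
  have e1 : h.symm 0 = h'.symm 0 := congrArg Prod.fst e
  have e2 : ∀ q : ℚ, h q = h' q := fun q => congrFun (congrArg Prod.snd e) q
  ext x
  by_cases hx : x = h.symm 0
  · have hx' : x = h'.symm 0 := hx.trans e1
    rw [(Equiv.eq_symm_apply _).1 hx, (Equiv.eq_symm_apply _).1 hx']
  have hx1 : h x ≠ 0 := fun h0 => hx ((Equiv.eq_symm_apply _).2 h0)
  have hx2 : h' x ≠ 0 := fun h0 => hx (((Equiv.eq_symm_apply _).2 h0).trans e1.symm)
  by_contra hne
  obtain ⟨U, V, hU, hV, hxU, hxV, hd⟩ := t2_separation hne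
  have o1 : IsOpen (h ⁻¹' (U \ {0})) := ((hh _).2 (tau_isOpen_diff G hU)).1
  have o2 : IsOpen (h' ⁻¹' (V \ {0})) := ((hh' _).2 (tau_isOpen_diff G' hV)).1
  obtain ⟨_, ⟨hq1, hq2⟩, ⟨q, rfl⟩⟩ := (Rat.denseRange_cast (𝕜 := ℝ)).inter_open_nonempty _
    (o1.inter o2) ⟨x, ⟨hxU, hx1⟩, ⟨hxV, hx2⟩⟩
  have hq2' : h' q ∈ V := hq2.1
  rw [← e2 q] at hq2'
  exact Set.disjoint_left.1 hd hq1.1 hq2'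

/-- A target topology is determined by its source and the code of a homeomorphism onto it. -/
lemma tau_eq_of_homeoCode_eq {F G G' : Filter ℕ} {h h' : ℝ ≃ ℝ} (hh : IsHomeo h F G)
    (hh' : IsHomeo h' F G') (e : homeoCode h = homeoCode h') : tau G = tau G' := by
  obtain rfl := eq_of_homeoCode_eq hh hh' e
  exact TopologicalSpace.ext_iff.2 fun U => (hh U).symm.trans (hh' U)

/-- Two sets of branches are equivalent when their topologies are homeomorphic. -/
def homeoSetoid : Setoid (Set (Set ℕ)) where
  r X Y := ∃ e : ℝ ≃ ℝ, IsHomeo e (famFilter X) (famFilter Y)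
  iseqv :=
    { refl := fun _ => ⟨Equiv.refl ℝ, fun _ => Iff.rfl⟩
      symm := fun {_ _} ⟨e, he⟩ => ⟨e.symm, fun U => by
        rw [← he, ← preimage_comp, Equiv.symm_comp_self, preimage_id]⟩
      trans := fun {_ _ _} ⟨e, he⟩ ⟨k, hk⟩ => ⟨e.trans k, fun U => by
        rw [Equiv.coe_trans, preimage_comp, he, hk]⟩ }

lemma mk_params : Cardinal.mk (Set (Set ℕ)) = 2 ^ Cardinal.continuum := by
  simp [Cardinal.mk_set]

lemma mk_codes : Cardinal.mk (ℝ × (ℚ → ℝ)) = Cardinal.continuum := by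
  simp [Cardinal.mk_real]

lemma mk_homeo_classes : Cardinal.mk (Quotient homeoSetoid) = 2 ^ Cardinal.continuum := by
  apply le_antisymm
  · exact mk_params ▸ Cardinal.mk_quotient_le
  · have hrel : ∀ X : Set (Set ℕ), ∃ e : ℝ ≃ ℝ,
        IsHomeo e (famFilter (Quotient.mk homeoSetoid X).out) (famFilter X) := fun X =>
      Quotient.exact (s := homeoSetoid) (Quotient.out_eq _)
    choose h hh using hrel
    have hinj : Function.Injective fun X : Set (Set ℕ) =>
        ((Quotient.mk homeoSetoid X, homeoCode (h X)) :
          Quotient homeoSetoid × (ℝ × (ℚ → ℝ))) := by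
      intro X Y hXY
      have hq : Quotient.mk homeoSetoid X = Quotient.mk homeoSetoid Y := congrArg Prod.fst hXY
      have hc : homeoCode (h X) = homeoCode (h Y) := congrArg Prod.snd hXY
      exact famTau_injective (tau_eq_of_homeoCode_eq (hh X) (hq ▸ hh Y) hc)
    have hle := Cardinal.mk_le_of_injective hinj
    rw [Cardinal.mk_prod, Cardinal.lift_id, Cardinal.lift_id, mk_codes, mk_params] at hle
    by_contra! hlt
    exact absurd hle (not_le.2 (Cardinal.mul_lt_of_lt
      (Cardinal.aleph0_le_continuum.trans (Cardinal.cantor _).le) hlt (Cardinal.cantor _)))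

/-- There is 𝒯 ⊆ 𝓛 with |𝒯| = 2^𝔠 such that each (ℝ, τ), τ ∈ 𝒯, is
a completely normal Baire space and distinct members give non-homeomorphic spaces. -/
theorem statement_6 :
    ∃ 𝒯 : Set (TopologicalSpace ℝ),
      Cardinal.mk ↥𝒯 = 2 ^ Cardinal.continuum ∧
      (∀ τ ∈ 𝒯, InL τ ∧ @CompletelyNormalSpace ℝ τ ∧ @BaireSpace ℝ τ) ∧
      ∀ τ ∈ 𝒯, ∀ τ' ∈ 𝒯, τ ≠ τ' → IsEmpty (@Homeomorph ℝ ℝ τ τ') := by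
  have hinj := famTau_injective.comp (Quotient.out_injective (s := homeoSetoid))
  -- One representative topology from each homeomorphism class.
  refine ⟨range fun q : Quotient homeoSetoid => famTau q.out, ?_, ?_, ?_⟩
  · exact (Cardinal.mk_range_eq _ hinj).trans mk_homeo_classes
  · rintro _ ⟨q, rfl⟩
    exact ⟨⟨tau_coarser _, tau_t2 inf_le_left⟩, tau_completelyNormal _, tau_baire _⟩
  · rintro _ ⟨q, rfl⟩ _ ⟨q', rfl⟩ hne
    refine ⟨fun h => hne ?_⟩
    have : q = q' := by
      rw [← Quotient.out_eq q, ← Quotient.out_eq q']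
      exact Quotient.sound (s := homeoSetoid)
        ⟨@Homeomorph.toEquiv ℝ ℝ (famTau q.out) (famTau q'.out) h,
          fun U => @Homeomorph.isOpen_preimage ℝ ℝ (famTau q.out) (famTau q'.out) h U⟩
    rw [this]
end

section
/- There is a family ℋ of countably infinite G_δ-subsets of the Euclidean space ℝ such that |ℋ| = c and for any two distinct members H, H' ∈ ℋ the subspaces H and H' of the Euclidean space ℝ are not homeomorphic. -/
/-!
The members of the family are coded by sets `S ⊆ ℕ`. Identify a finite set `F ⊆ ℕ` with its
indicator in the Cantor space `ℕ → Bool`, and let `space S` consist of the nonempty finite sets `F`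
with `min F ∈ S`, `|F| ≤ min F + 3` and `|F| ≠ 2`.

All these points lie in the closed set of (indicators of) sets `A` with `|A| ≤ n + 3` for every
`n ∈ A`. That closed set consists of finite sets, so it is countable, and any subset of a countable
closed set is a `G_δ`. The Cantor set is closed in `ℝ`, so this carries over to `ℝ`.

The set `S` is recovered from the topology of `space S` as follows.
* Sets close to `F` are the end-extensions of `F` by large elements, so the Cantor–Bendixson rank of
  `F` is `min F + 3 - |F|` if `|F| ≥ 3`, and it is `min F + 1` if `|F| = 1`, because the level
  `|F| = 2` is missing. A finite rank function is characterised by a local condition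
  (`IsRank`), which determines it uniquely (`IsRank.unique`), so homeomorphisms preserve it.
* A point with `|F| ≥ 3` has a compact neighbourhood, whereas `{n}` has none: every neighbourhood
  contains, for some `k`, all points `{n, k, l}` with `l > k`, and these converge to the missing
  point `{n, k}`.
Hence the ranks of the points without compact neighbourhood are exactly the numbers `n + 1`,
`n ∈ S`. Letting `S` range over the sets containing `0` gives continuum many spaces.
-/

open Topology Set

open Filter

namespace GdeltaFamily

/-! ### Rank functions and homeomorphism invariance -/

/-- `r` is the Cantor–Bendixson rank function of a scattered space of height at most `ω`: near `x`
all other points have smaller rank, and if `r x = m + 1` then points of rank `m` accumulate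
at `x`. -/
def IsRank {X : Type*} [TopologicalSpace X] (r : X → ℕ) : Prop :=
  ∀ x, (∀ᶠ y in 𝓝[≠] x, r y < r x) ∧ ∀ m, r x = m + 1 → ∃ᶠ y in 𝓝[≠] x, r y = m

theorem IsRank.unique {X : Type*} [TopologicalSpace X] {r s : X → ℕ} (hr : IsRank r)
    (hs : IsRank s) (x : X) : r x = s x := by
  suffices h : ∀ m x, r x = m → s x = m from (h _ x rfl).symm
  intro m
  induction m using Nat.strong_induction_on with
  | _ m ih =>
    intro x hx
    have near : ∀ᶠ y in 𝓝[≠] x, r y < m ∧ s y = r y ∧ s y < s x := by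
      filter_upwards [(hr x).1, (hs x).1] with y h1 h2
      exact ⟨hx ▸ h1, ih _ (hx ▸ h1) y rfl, h2⟩
    apply le_antisymm
    · by_contra! hlt
      obtain ⟨k, hk⟩ : ∃ k, s x = k + 1 := ⟨s x - 1, by omega⟩
      obtain ⟨y, hy, h1, h2, h3⟩ := (((hs x).2 k hk).and_eventually near).exists
      omega
    · rcases m with _ | j
      · exact Nat.zero_le _
      · obtain ⟨y, hy, h1, h2, h3⟩ := (((hr x).2 j hx).and_eventually near).exists
        omega

theorem IsRank.comp_homeomorph {X Y : Type*} [TopologicalSpace X] [TopologicalSpace Y] {r : Y → ℕ}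
    (hr : IsRank r) (h : X ≃ₜ Y) : IsRank (r ∘ h) := by
  intro x
  have key := hr (h x)
  rw [← h.map_punctured_nhds_eq] at key
  simpa only [eventually_map, frequently_map, Function.comp_apply] using key

/-- `x` has a compact neighbourhood. -/
def LocCpt {X : Type*} [TopologicalSpace X] (x : X) : Prop := ∃ K ∈ 𝓝 x, IsCompact K

theorem LocCpt.of_homeomorph {X Y : Type*} [TopologicalSpace X] [TopologicalSpace Y]
    (h : X ≃ₜ Y) {x : X} (hx : LocCpt (h x)) : LocCpt x := by
  obtain ⟨K, hK, hc⟩ := hx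
  exact ⟨h ⁻¹' K, h.continuous.continuousAt hK, h.isCompact_preimage.2 hc⟩

/-! ### Finite subsets of `ℕ` -/

/-- The least element of `F` (with value `0` for the empty set). -/
noncomputable def low (F : Finset ℕ) : ℕ := sInf (F : Set ℕ)

theorem low_mem {F : Finset ℕ} (hF : F.Nonempty) : low F ∈ F := by
  have := Nat.sInf_mem (s := (F : Set ℕ)) (by simpa using hF)
  simpa [low] using this

theorem low_le {F : Finset ℕ} {i : ℕ} (hi : i ∈ F) : low F ≤ i :=
  Nat.sInf_le (by simpa using hi)

theorem low_singleton (n : ℕ) : low {n} = n := by simp [low]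

/-- The nonempty finite sets `F` with `min F ∈ S`, `|F| ≤ min F + 3` and `|F| ≠ 2`. -/
def family (S : Set ℕ) : Set (Finset ℕ) :=
  {F | F.Nonempty ∧ low F ∈ S ∧ F.card ≤ low F + 3 ∧ F.card ≠ 2}

/-- The Cantor–Bendixson rank of `F` as a point of the space coded by `S`, for any `S` with
`F ∈ family S`. -/
noncomputable def rk (F : Finset ℕ) : ℕ :=
  if F.card = 1 then low F + 1 else low F + 3 - F.card

/-- `G` agrees with `F` below `M`. -/
def Agree (F G : Finset ℕ) (M : ℕ) : Prop := ∀ i < M, (i ∈ G ↔ i ∈ F)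

theorem Agree.subset {F G : Finset ℕ} (h : Agree F G (F.sup id + 1)) : F ⊆ G := fun i hi =>
  (h i (Nat.lt_succ_of_le (Finset.le_sup (f := id) hi))).2 hi

theorem Agree.low_eq {F G : Finset ℕ} (hF : F.Nonempty) (h : Agree F G (F.sup id + 1)) :
    low G = low F := by
  have h1 : low G ≤ low F := low_le (h.subset (low_mem hF))
  have h2 : low F ≤ F.sup id := Finset.le_sup (f := id) (low_mem hF)
  have h3 : low G ∈ F := (h _ (by omega)).1 (low_mem (hF.mono h.subset))
  exact le_antisymm h1 (low_le h3)

theorem rk_lt_of_agree {S : Set ℕ} {F G : Finset ℕ} (hF : F ∈ family S) (hG : G ∈ family S)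
    (h : Agree F G (F.sup id + 1)) (hne : G ≠ F) : rk G < rk F := by
  have hl := h.low_eq hF.1
  have hc : F.card < G.card := Finset.card_lt_card (h.subset.ssubset_of_ne hne.symm)
  have h0 := hF.1.card_pos
  obtain ⟨-, -, h1, h2⟩ := hF
  obtain ⟨-, -, h3, h4⟩ := hG
  unfold rk
  rw [hl] at *
  split_ifs <;> omega

theorem agree_union {F E : Finset ℕ} {M : ℕ} (hE : ∀ i ∈ E, M ≤ i) : Agree F (F ∪ E) M := by
  intro i hi
  simp only [Finset.mem_union, or_iff_left_iff_imp]
  intro h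
  have := hE i h
  omega

theorem exists_extension {S : Set ℕ} {F : Finset ℕ} (hF : F ∈ family S) {m : ℕ}
    (hm : rk F = m + 1) (M : ℕ) : ∃ G ∈ family S, Agree F G M ∧ G ≠ F ∧ rk G = m := by
  set k := max M (F.sup id + 1) with hk
  have hkF : ∀ i ∈ F, i < k := fun i hi => by
    have : i ≤ F.sup id := Finset.le_sup (f := id) hi
    omega
  -- A singleton is extended by two elements, every other set by one.
  obtain ⟨E, hE, hd, hc⟩ : ∃ E : Finset ℕ, (∀ i ∈ E, k ≤ i) ∧ Disjoint F E ∧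
      E.card = if F.card = 1 then 2 else 1 := by
    by_cases h1 : F.card = 1
    · refine ⟨{k, k + 1}, by simp, ?_, by simp [h1]⟩
      rw [Finset.disjoint_left]
      intro i hi
      have := hkF i hi
      simp only [Finset.mem_insert, Finset.mem_singleton]
      omega
    · refine ⟨{k}, by simp, ?_, by simp [h1]⟩
      rw [Finset.disjoint_left]
      intro i hi
      have := hkF i hi
      simp only [Finset.mem_singleton]
      omega
  have hA : Agree F (F ∪ E) k := agree_union hE
  have hl : low (F ∪ E) = low F := Agree.low_eq hF.1 (fun i hi => hA i (by omega))
  have hcard : (F ∪ E).card = F.card + E.card := Finset.card_union_of_disjoint hd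
  have h0 := hF.1.card_pos
  obtain ⟨hne, hS, h1, h2⟩ := hF
  unfold rk at hm
  refine ⟨F ∪ E, ⟨hne.mono Finset.subset_union_left, hl ▸ hS, ?_, ?_⟩,
    fun i hi => hA i (by omega), ?_, ?_⟩
  · rw [hl, hcard, hc]
    split_ifs at * <;> omega
  · rw [hcard, hc]
    split_ifs <;> omega
  · intro h
    rw [h] at hcard
    split_ifs at hc <;> omega
  · unfold rk
    rw [hl, hcard, hc]
    split_ifs at * <;> omega

/-! ### The spaces inside the Cantor space -/

/-- The indicator function of a finite set, as a point of the Cantor space. -/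
def code (F : Finset ℕ) : ℕ → Bool := fun i => decide (i ∈ F)

theorem code_injective : Function.Injective code := by
  intro F G h
  ext i
  simpa [code] using congrFun h i

theorem code_eq_iff {F G : Finset ℕ} {i : ℕ} : code G i = code F i ↔ (i ∈ G ↔ i ∈ F) := by
  simp [code]

/-- The space coded by `S`. -/
def space (S : Set ℕ) : Set (ℕ → Bool) := code '' family S

/-- The rank of a point of the Cantor space that is the indicator of a finite set. -/
noncomputable def rank (x : ℕ → Bool) : ℕ := rk (Function.invFun code x)

theorem rank_code (F : Finset ℕ) : rank (code F) = rk F := by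
  rw [rank, Function.leftInverse_invFun code_injective F]

/-- The indicators of sets `A` such that `|A| ≤ n + 3` for every `n ∈ A`. -/
def hull : Set (ℕ → Bool) :=
  {x | ∀ (n : ℕ) (G : Finset ℕ), n + 3 < G.card → ¬ (x n = true ∧ ∀ i ∈ G, x i = true)}

theorem isClosed_hull : IsClosed hull := by
  simp only [hull, ofPred_forall]
  refine isClosed_iInter fun n => isClosed_iInter fun G => isClosed_iInter fun _ => ?_
  have hop : ∀ i : ℕ, IsOpen {x : ℕ → Bool | x i = true} := fun i => by
    have hc : Continuous fun x : ℕ → Bool => x i := continuous_apply i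
    exact (isOpen_discrete ({true} : Set Bool)).preimage hc
  have h : IsOpen {x : ℕ → Bool | x n = true ∧ ∀ i ∈ G, x i = true} := by
    have : {x : ℕ → Bool | x n = true ∧ ∀ i ∈ G, x i = true} =
        {x | x n = true} ∩ ⋂ i ∈ G, {x | x i = true} := by
      ext x
      simp
    rw [this]
    exact (hop n).inter (isOpen_biInter_finset fun i _ => hop i)
  exact h.isClosed_compl

theorem exists_code_of_mem_hull {x : ℕ → Bool} (hx : x ∈ hull) : ∃ F, code F = x := by
  have hfin : {i | x i = true}.Finite := by
    by_contra hinf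
    have hinf : {i | x i = true}.Infinite := hinf
    obtain ⟨n, hn⟩ := hinf.nonempty
    obtain ⟨G, hG, hc⟩ := hinf.exists_subset_card_eq (n + 4)
    exact hx n G (by omega) ⟨hn, fun i hi => hG hi⟩
  refine ⟨hfin.toFinset, ?_⟩
  ext i
  simp [code]

theorem countable_hull : hull.Countable :=
  (countable_range code).mono fun _ hx => exists_code_of_mem_hull hx

theorem code_mem_hull {F : Finset ℕ} (h : F.Nonempty → F.card ≤ low F + 3) : code F ∈ hull := by
  rintro n G hG ⟨hn, hs⟩
  have hn : n ∈ F := by simpa [code] using hn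
  have hs : G ⊆ F := fun i hi => by simpa [code] using hs i hi
  have h1 := Finset.card_le_card hs
  have h2 := low_le hn
  have h3 := h ⟨n, hn⟩
  omega

theorem card_le_of_code_mem_hull {F : Finset ℕ} (h : code F ∈ hull) (hne : F.Nonempty) :
    F.card ≤ low F + 3 := by
  by_contra! hlt
  exact h (low F) F hlt ⟨by simpa [code] using low_mem hne, by simp [code]⟩

theorem space_subset_hull (S : Set ℕ) : space S ⊆ hull := by
  rintro _ ⟨F, hF, rfl⟩
  exact code_mem_hull fun _ => hF.2.2.1

theorem hasBasis_nhds {H : Set (ℕ → Bool)} (x : H) :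
    (𝓝 x).HasBasis (fun _ : ℕ => True) fun M => {y : H | ∀ i < M, y.1 i = x.1 i} := by
  refine ⟨fun U => ⟨fun hU => ?_, ?_⟩⟩
  · obtain ⟨V, hV, hVU⟩ := mem_nhds_subtype _ _ _ |>.1 hU
    obtain ⟨_, ⟨z, M, rfl⟩, hx, hW⟩ :=
      (PiNat.isTopologicalBasis_cylinders (E := fun _ : ℕ => Bool)).mem_nhds_iff.1 hV
    refine ⟨M, trivial, fun y hy => hVU (hW ?_)⟩
    rw [PiNat.mem_cylinder_iff] at hx ⊢
    exact fun i hi => (hy i hi).trans (hx i hi)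
  · rintro ⟨M, -, hM⟩
    refine mem_of_superset ?_ hM
    exact ((PiNat.isOpen_cylinder (fun _ : ℕ => Bool) x.1 M).preimage
      continuous_subtype_val).mem_nhds (PiNat.self_mem_cylinder x.1 M)

theorem isRank_rank (S : Set ℕ) : IsRank fun x : space S => rank x := by
  rintro ⟨_, F, hF, rfl⟩
  constructor
  · rw [eventually_nhdsWithin_iff]
    refine (hasBasis_nhds _).eventually_iff.2 ⟨F.sup id + 1, trivial, ?_⟩
    rintro ⟨_, G, hG, rfl⟩ hy hne
    simp only [rank_code]
    refine rk_lt_of_agree hF hG (fun i hi => code_eq_iff.1 (hy i hi)) ?_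
    rintro rfl
    exact hne rfl
  · intro m hm
    simp only [rank_code] at hm
    rw [frequently_nhdsWithin_iff]
    refine (hasBasis_nhds _).frequently_iff.2 fun {M} _ => ?_
    obtain ⟨G, hG, hA, hne, hr⟩ := exists_extension hF hm M
    refine ⟨⟨code G, G, hG, rfl⟩, fun i hi => code_eq_iff.2 (hA i hi), by simpa [rank_code], ?_⟩
    intro h
    exact hne (code_injective (congrArg Subtype.val h))

theorem locCpt_of_card {S : Set ℕ} {F : Finset ℕ} (hF : F ∈ family S) (h1 : F.card ≠ 1) :
    LocCpt (⟨code F, F, hF, rfl⟩ : space S) := by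
  refine ⟨_, (hasBasis_nhds _).mem_of_mem (i := F.sup id + 1) trivial, ?_⟩
  rw [Subtype.isCompact_iff]
  -- Near `F` the space coincides with the closed set `hull`.
  have heq : Subtype.val '' {y : space S | ∀ i < F.sup id + 1, y.1 i = code F i} =
      hull ∩ ⋂ i, ⋂ (_ : i < F.sup id + 1), {y : ℕ → Bool | y i = code F i} := by
    ext y
    simp only [mem_image, mem_ofPred_eq, mem_inter_iff, mem_iInter]
    constructor
    · rintro ⟨z, hz, rfl⟩
      exact ⟨space_subset_hull S z.2, hz⟩
    · rintro ⟨hy, hyF⟩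
      obtain ⟨G, rfl⟩ := exists_code_of_mem_hull hy
      have hA : Agree F G (F.sup id + 1) := fun i hi => code_eq_iff.1 (hyF i hi)
      have hne : G.Nonempty := hF.1.mono hA.subset
      have hc := Finset.card_le_card hA.subset
      have h0 := hF.1.card_pos
      have h2 := hF.2.2.2
      have hG : G ∈ family S :=
        ⟨hne, by rw [hA.low_eq hF.1]; exact hF.2.1, card_le_of_code_mem_hull hy hne, by omega⟩
      exact ⟨⟨code G, G, hG, rfl⟩, hyF, rfl⟩
  rw [heq]
  refine (isClosed_hull.inter (isClosed_iInter fun i => isClosed_iInter fun _ => ?_)).isCompact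
  exact isClosed_eq (continuous_apply i) continuous_const

theorem singleton_mem_family {S : Set ℕ} {n : ℕ} (hn : n ∈ S) : {n} ∈ family S :=
  ⟨by simp, by rwa [low_singleton], by simp, by simp⟩

theorem not_locCpt_singleton {S : Set ℕ} {n : ℕ} (hn : n ∈ S) :
    ¬ LocCpt (⟨code {n}, {n}, singleton_mem_family hn, rfl⟩ : space S) := by
  rintro ⟨K, hK, hc⟩
  obtain ⟨M, -, hM⟩ := (hasBasis_nhds _).mem_iff.1 hK
  have hcl : IsClosed (Subtype.val '' K) := (Subtype.isCompact_iff.1 hc).isClosed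
  -- The points `{n, k, k + j + 1}` lie in `K` and converge to `{n, k}` as `j → ∞`.
  set k := M + n + 1 with hk
  have hmem : ∀ j : ℕ, code {n, k, k + j + 1} ∈ Subtype.val '' K := by
    intro j
    have hl : low {n, k, k + j + 1} = n := by
      apply le_antisymm (low_le (by simp))
      have := low_mem (F := {n, k, k + j + 1}) (by simp)
      simp only [Finset.mem_insert, Finset.mem_singleton] at this
      omega
    have hcard : ({n, k, k + j + 1} : Finset ℕ).card = 3 :=
      Finset.card_eq_three.2 ⟨n, k, k + j + 1, by omega, by omega, by omega, rfl⟩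
    have hG : {n, k, k + j + 1} ∈ family S :=
      ⟨by simp, by rwa [hl], by omega, by omega⟩
    refine ⟨⟨_, _, hG, rfl⟩, hM fun i hi => code_eq_iff.2 ?_, rfl⟩
    simp only [Finset.mem_insert, Finset.mem_singleton]
    omega
  have hlim : Tendsto (fun j : ℕ => code {n, k, k + j + 1}) atTop (𝓝 (code {n, k})) := by
    rw [tendsto_pi_nhds]
    intro i
    refine tendsto_const_nhds.congr' ?_
    filter_upwards [eventually_ge_atTop i] with j hj
    refine (code_eq_iff.2 ?_).symm
    simp only [Finset.mem_insert, Finset.mem_singleton]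
    omega
  obtain ⟨⟨_, F, hF, rfl⟩, -, h⟩ := hcl.mem_of_tendsto hlim (Eventually.of_forall hmem)
  have hFe : F = {n, k} := code_injective h
  exact hF.2.2.2 (hFe ▸ Finset.card_pair (by omega))

/-- `S` is determined by the ranks of the points of `space S` without compact neighbourhood. -/
theorem mem_iff_exists_rank (S : Set ℕ) (n : ℕ) :
    n ∈ S ↔ ∃ x : space S, ¬ LocCpt x ∧ rank x = n + 1 := by
  constructor
  · intro hn
    refine ⟨_, not_locCpt_singleton hn, ?_⟩
    simp [rank_code, rk, low_singleton]
  · rintro ⟨⟨_, F, hF, rfl⟩, hx, hr⟩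
    have h1 : F.card = 1 := by
      by_contra h1
      exact hx (locCpt_of_card hF h1)
    simp only [rank_code, rk, h1, if_true] at hr
    have : low F = n := by omega
    exact this ▸ hF.2.1

theorem subset_of_homeomorph {S T : Set ℕ} (h : space S ≃ₜ space T) : S ⊆ T := by
  intro n hn
  obtain ⟨x, hx, hr⟩ := (mem_iff_exists_rank S n).1 hn
  refine (mem_iff_exists_rank T n).2 ⟨h x, fun hc => hx (hc.of_homeomorph h), ?_⟩
  rw [← hr]
  exact (((isRank_rank T).comp_homeomorph h).unique (isRank_rank S) x)

theorem eq_of_homeomorph {S T : Set ℕ} (h : space S ≃ₜ space T) : S = T :=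
  (subset_of_homeomorph h).antisymm (subset_of_homeomorph h.symm)

theorem infinite_space {S : Set ℕ} {n : ℕ} (hn : n ∈ S) : (space S).Infinite := by
  let x : space S := ⟨code {n}, {n}, singleton_mem_family hn, rfl⟩
  have hr : rank x = n + 1 := by simp [x, rank_code, rk, low_singleton]
  intro hfin
  have : Finite (space S) := hfin
  -- A point of positive rank is not isolated.
  obtain ⟨y, hy, hne⟩ := (frequently_nhdsWithin_iff.1 ((isRank_rank S x).2 n hr)).and_eventually
    ((isOpen_discrete {x}).mem_nhds rfl) |>.exists
  exact hy.2 hne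

/-! ### Transfer to the real line -/

/-- The embedding of the Cantor space onto the Cantor set in `ℝ`. -/
noncomputable def toReal (x : ℕ → Bool) : ℝ := (cantorSetHomeomorphNatToBool.symm x : ℝ)

theorem isClosedEmbedding_toReal : IsClosedEmbedding toReal := by
  apply Continuous.isClosedEmbedding
  · exact continuous_subtype_val.comp cantorSetHomeomorphNatToBool.symm.continuous
  · exact Subtype.val_injective.comp cantorSetHomeomorphNatToBool.symm.injective

theorem isGδ_of_subset_countable_closed {X : Type*} [TopologicalSpace X] [T1Space X]
    [PerfectlyNormalSpace X] {H K : Set X}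
    (hK : IsClosed K) (hc : K.Countable) (h : H ⊆ K) : IsGδ H := by
  have : H = K ∩ (K \ H)ᶜ := by
    ext x
    have := @h x
    simp only [mem_inter_iff, mem_compl_iff, Set.mem_sdiff]
    tauto
  rw [this]
  exact hK.isGδ.inter (hc.mono sdiff_subset).isGδ_compl

/-- The member of the family coded by `S`; the shift makes every coding set contain `0`, so that
the resulting space is infinite. -/
noncomputable def member (S : Set ℕ) : Set ℝ := toReal '' space (insert 0 (Nat.succ '' S))

theorem eq_of_member_homeomorph {S T : Set ℕ} (h : member S ≃ₜ member T) : S = T := by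
  have e := isClosedEmbedding_toReal.isEmbedding
  have key := eq_of_homeomorph
    (((e.homeomorphImage _).trans h).trans (e.homeomorphImage _).symm)
  ext n
  simpa using congrArg (n + 1 ∈ ·) key

end GdeltaFamily

open GdeltaFamily in
/-- There is a family ℋ of countably infinite G_δ-subsets of the
Euclidean ℝ with |ℋ| = 𝔠 whose distinct members are non-homeomorphic subspaces. -/
theorem statement_8 :
    ∃ ℋ : Set (Set ℝ),
      Cardinal.mk ↥ℋ = Cardinal.continuum ∧
      (∀ H ∈ ℋ, H.Countable ∧ H.Infinite ∧ IsGδ H) ∧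
      ∀ H ∈ ℋ, ∀ H' ∈ ℋ, H ≠ H' → IsEmpty (↥H ≃ₜ ↥H') := by
  refine ⟨range member, ?_, ?_, ?_⟩
  · have hinj : Function.Injective member := fun S T h =>
      eq_of_member_homeomorph (Homeomorph.setCongr h)
    rw [Cardinal.mk_range_eq _ hinj, Cardinal.mk_set_nat]
  · rintro _ ⟨S, rfl⟩
    have hsub : member S ⊆ toReal '' hull := image_mono (space_subset_hull _)
    have hc : (toReal '' hull).Countable := countable_hull.image _
    refine ⟨hc.mono hsub, ?_, isGδ_of_subset_countable_closed
      (isClosedEmbedding_toReal.isClosedMap _ isClosed_hull) hc hsub⟩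
    exact (infinite_space (mem_insert _ _)).image isClosedEmbedding_toReal.injective.injOn
  · rintro _ ⟨S, rfl⟩ _ ⟨T, rfl⟩ hne
    exact ⟨fun h => hne (congrArg member (eq_of_member_homeomorph h))⟩
end

section
/- There exists a family 𝒯 ⊆ 𝓛 with |𝒯| = c such that for each τ ∈ 𝒯 the space (ℝ, τ) is completely metrizable, and for distinct τ, τ' ∈ 𝒯 the spaces (ℝ, τ) and (ℝ, τ') are not homeomorphic. -/
/-!
For a nonempty closed set `K ⊆ [0, ∞)`, a Euclidean-continuous injective curve
`curve K : ℝ → ℝ⁴ × ℝ^ℕ` with closed image is constructed; it induces a completely metrizable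
Hausdorff topology `top K` on `ℝ` coarser than the Euclidean one. The half line `t ≥ 0` is embedded
as a straight ray. With `s = -t`, the tail `t < 0` has first coordinate `s * sin s`, which sweeps
over `ℝ` infinitely often; a height `s * dist (s * sin s, K)`, which lets the tail come back near
the ray only at points of `K`; and two coordinates `s / (1 + s ^ 3)`, `s ^ 2 / (1 + s ^ 3)` tracing
the folium of Descartes, which make the curve injective and tend to `0` at the end of the tail. The
remaining coordinates blow up along the tail wherever the height does not tend to `0`, so the image
is closed. The end of the tail then accumulates exactly at the points of `K`
(`ultrafilter_cases`), and these are the points where `top K` differs from the Euclidean topology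
(`nhds_top_eq_iff`).

A path for `top K` is a Euclidean path (`continuous_of_curve_comp`): its height is bounded, while
the height is unbounded between successive returns of the tail to `K`. Hence a homeomorphism from
`top K` to `top L` is a homeomorphism of the Euclidean line carrying `K` onto `L`
(`homeomorph_rigid`).

Finally `A ⊆ ℕ` is coded by the closed set `code A` with components `[n, n + 1/2]` for `n ∈ A` and
`{n}` for `n ∉ A`. A homeomorphism of `ℝ` from `code A` onto `code B` is increasing and permutes the
left endpoints of the components, which are the natural numbers; so it fixes every natural number
and `A = B` (`code_rigid`). The `2 ^ ℵ₀` subsets of `ℕ` give the family.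
-/

open Topology Set

namespace CurveTop

open Filter

noncomputable section

/-! ### The curve -/

/-- The tail parameter: `s = -t` on the tail `t < 0`, and `s = 0` on the half line `t ≥ 0`. -/
def tail (t : ℝ) : ℝ := max (-t) 0

/-- First coordinate: `t` on the half line and `s * sin s`, which sweeps over all of `ℝ` infinitely
often, on the tail. -/
def pos (t : ℝ) : ℝ := max t 0 + tail t * Real.sin (tail t)

/-- Height: vanishes on the half line; on the tail it can stay bounded only where `pos` approaches
`K`. -/
def height (K : Set ℝ) (t : ℝ) : ℝ := tail t * Metric.infDist (pos t) K

/-- First coordinate `s / (1 + s ^ 3)` of the folium. -/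
def fol₁ (t : ℝ) : ℝ := tail t / (1 + tail t ^ 3)

/-- Second coordinate `s ^ 2 / (1 + s ^ 3)` of the folium. -/
def fol₂ (t : ℝ) : ℝ := tail t ^ 2 / (1 + tail t ^ 3)

/-- The `n`-th barrier: it blows up along the tail where the height stays above `1 / (n + 1)`. -/
def barrier (K : Set ℝ) (n : ℕ) (t : ℝ) : ℝ :=
  (max (1 / ((n : ℝ) + 1) - height K t) 0 + fol₁ t)⁻¹

/-- The injective curve in `ℝ⁴ × ℝ^ℕ` from which the topology on `ℝ` is induced. -/
def curve (K : Set ℝ) (t : ℝ) : ℝ × ℝ × ℝ × ℝ × (ℕ → ℝ) :=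
  (pos t, height K t, fol₁ t, fol₂ t, fun n => barrier K n t)

/-- The topology on `ℝ` induced by `curve K`. -/
abbrev top (K : Set ℝ) : TopologicalSpace ℝ := TopologicalSpace.induced (curve K) inferInstance

lemma tail_nonneg (t : ℝ) : 0 ≤ tail t := le_max_right _ _

lemma tail_of_nonneg {t : ℝ} (h : 0 ≤ t) : tail t = 0 := max_eq_right (by linarith)

lemma tail_of_nonpos {t : ℝ} (h : t ≤ 0) : tail t = -t := max_eq_left (by linarith)

lemma den_pos (t : ℝ) : 0 < 1 + tail t ^ 3 := by
  have := pow_nonneg (tail_nonneg t) 3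
  linarith

lemma fol₁_nonneg (t : ℝ) : 0 ≤ fol₁ t := div_nonneg (tail_nonneg t) (den_pos t).le

lemma fol₁_pos {t : ℝ} (h : 0 < tail t) : 0 < fol₁ t := div_pos h (den_pos t)

lemma fol₂_eq (t : ℝ) : fol₂ t = tail t * fol₁ t := by
  unfold fol₁ fol₂; ring

lemma height_nonneg (K : Set ℝ) (t : ℝ) : 0 ≤ height K t :=
  mul_nonneg (tail_nonneg t) Metric.infDist_nonneg

lemma pos_of_nonneg {t : ℝ} (h : 0 ≤ t) : pos t = t := by
  simp [pos, tail_of_nonneg h, h]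

lemma height_of_nonneg (K : Set ℝ) {t : ℝ} (h : 0 ≤ t) : height K t = 0 := by
  simp [height, tail_of_nonneg h]

lemma barrier_den_pos (K : Set ℝ) (n : ℕ) (t : ℝ) :
    0 < max (1 / ((n : ℝ) + 1) - height K t) 0 + fol₁ t := by
  rcases (tail_nonneg t).eq_or_lt with h | h
  · have h1 : height K t = 0 := by simp [height, ← h]
    have h2 : (0 : ℝ) < 1 / ((n : ℝ) + 1) := by positivity
    have := le_max_left (1 / ((n : ℝ) + 1) - height K t) 0
    have := fol₁_nonneg t
    linarith
  · exact add_pos_of_nonneg_of_pos (le_max_right _ _) (fol₁_pos h)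

lemma continuous_tail : Continuous tail := by unfold tail; fun_prop

lemma continuous_pos : Continuous pos := by
  have := continuous_tail
  unfold pos; fun_prop

lemma continuous_height (K : Set ℝ) : Continuous (height K) :=
  continuous_tail.mul ((Metric.continuous_infDist_pt K).comp continuous_pos)

lemma continuous_fol₁ : Continuous fol₁ :=
  continuous_tail.div (continuous_const.add (continuous_tail.pow 3)) fun t => (den_pos t).ne'

lemma continuous_fol₂ : Continuous fol₂ :=
  (continuous_tail.pow 2).div (continuous_const.add (continuous_tail.pow 3))
    fun t => (den_pos t).ne'

lemma continuous_curve (K : Set ℝ) : Continuous (curve K) := by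
  refine continuous_pos.prodMk ((continuous_height K).prodMk
    (continuous_fol₁.prodMk (continuous_fol₂.prodMk (continuous_pi fun n => ?_))))
  exact (((continuous_const.sub (continuous_height K)).max continuous_const).add
    continuous_fol₁).inv₀ fun t => (barrier_den_pos K n t).ne'

lemma injective_curve (K : Set ℝ) : Function.Injective (curve K) := by
  intro a b hab
  simp only [curve, Prod.mk.injEq] at hab
  obtain ⟨hp, -, h1, h2, -⟩ := hab
  -- The quotient of the two folium coordinates is the tail parameter.
  have key : tail a = tail b := by
    rcases (tail_nonneg a).eq_or_lt with ha | ha <;> rcases (tail_nonneg b).eq_or_lt with hb | hb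
    · rw [← ha, ← hb]
    · have := fol₁_pos hb
      rw [← h1] at this
      simp [fol₁, ← ha] at this
    · have := fol₁_pos ha
      rw [h1] at this
      simp [fol₁, ← hb] at this
    · rw [fol₂_eq, fol₂_eq, h1] at h2
      exact mul_right_cancel₀ (fol₁_pos hb).ne' h2
  have hm : max a 0 = max b 0 := by
    simpa [pos, key] using hp
  have hid : ∀ t : ℝ, t = max t 0 - tail t := fun t => by
    rcases le_total t 0 with h | h
    · simp [tail_of_nonpos h, h]
    · simp [tail_of_nonneg h, h]
  rw [hid a, hid b, hm, key]

/-! ### Limits along the tail -/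

lemma tendsto_tail_atBot : Tendsto tail atBot atTop :=
  tendsto_atTop_mono (fun _ => le_max_left _ _) tendsto_neg_atBot_atTop

lemma tendsto_fol₁_atBot : Tendsto fol₁ atBot (𝓝 0) := by
  refine squeeze_zero' (.of_forall fol₁_nonneg) ?_ tendsto_tail_atBot.inv_tendsto_atTop
  filter_upwards [tendsto_tail_atBot.eventually_ge_atTop 1] with t ht
  rw [Pi.inv_apply, fol₁, div_le_iff₀ (den_pos t), inv_mul_eq_div, le_div_iff₀ (by linarith)]
  nlinarith [pow_nonneg (tail_nonneg t) 2, mul_nonneg (sq_nonneg (tail t)) (sub_nonneg.2 ht)]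

lemma tendsto_fol₂_atBot : Tendsto fol₂ atBot (𝓝 0) := by
  refine squeeze_zero' (.of_forall fun t => ?_) ?_ tendsto_tail_atBot.inv_tendsto_atTop
  · exact div_nonneg (sq_nonneg _) (den_pos t).le
  filter_upwards [tendsto_tail_atBot.eventually_ge_atTop 1] with t ht
  rw [Pi.inv_apply, fol₂, div_le_iff₀ (den_pos t), inv_mul_eq_div, le_div_iff₀ (by linarith)]
  nlinarith

lemma curve_of_nonneg (K : Set ℝ) {k : ℝ} (hk : 0 ≤ k) :
    curve K k = (k, 0, 0, 0, fun n : ℕ => (1 / ((n : ℝ) + 1))⁻¹) := by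
  have h1 : fol₁ k = 0 := by simp [fol₁, tail_of_nonneg hk]
  have h2 : fol₂ k = 0 := by simp [fol₂, tail_of_nonneg hk]
  have h3 : ∀ n : ℕ, (0 : ℝ) ≤ 1 / ((n : ℝ) + 1) := fun n => by positivity
  simp only [curve, barrier, pos_of_nonneg hk, height_of_nonneg K hk, h1, h2, sub_zero, add_zero,
    max_eq_left (h3 _)]

/-- An ultrafilter along which the curve converges either converges in `ℝ`, or runs down the tail
and the limit is the image of a point of `K`. This gives both the closedness of the image and
the comparison of neighbourhood filters. -/
lemma ultrafilter_cases {K : Set ℝ} (hK : IsClosed K) (hne : K.Nonempty) (h0 : K ⊆ Ici 0)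
    (G : Ultrafilter ℝ) {y : ℝ × ℝ × ℝ × ℝ × (ℕ → ℝ)} (hG : Tendsto (curve K) G (𝓝 y)) :
    (∃ t, (G : Filter ℝ) ≤ 𝓝 t ∧ curve K t = y) ∨
      ((G : Filter ℝ) ≤ atBot ∧ ∃ k ∈ K, curve K k = y) := by
  by_cases hex : ∃ t, (G : Filter ℝ) ≤ 𝓝 t
  · obtain ⟨t, ht⟩ := hex
    exact .inl ⟨t, ht, tendsto_nhds_unique (((continuous_curve K).tendsto t).mono_left ht) hG⟩
  right
  have hco : (G : Filter ℝ) ≤ cocompact ℝ := by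
    refine hasBasis_cocompact.ge_iff.2 fun C hC => ?_
    by_contra hmem
    obtain ⟨t, -, ht⟩ := hC.ultrafilter_le_nhds' G (Ultrafilter.compl_notMem_iff.1 hmem)
    exact hex ⟨t, ht⟩
  rw [cocompact_eq_atBot_atTop, Ultrafilter.le_sup_iff] at hco
  obtain ⟨y1, y2, y3, y4, y5⟩ := y
  have t1 : Tendsto pos G (𝓝 y1) := (continuous_fst.tendsto _).comp hG
  have r1 := (continuous_snd.tendsto _).comp hG
  have t2 : Tendsto (height K) G (𝓝 y2) := (continuous_fst.tendsto _).comp r1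
  have r2 := (continuous_snd.tendsto _).comp r1
  have t3 : Tendsto fol₁ G (𝓝 y3) := (continuous_fst.tendsto _).comp r2
  have r3 := (continuous_snd.tendsto _).comp r2
  have t4 : Tendsto fol₂ G (𝓝 y4) := (continuous_fst.tendsto _).comp r3
  have r4 := (continuous_snd.tendsto _).comp r3
  have t5 : ∀ n, Tendsto (barrier K n) G (𝓝 (y5 n)) := fun n =>
    ((continuous_apply n).tendsto _).comp r4
  rcases hco with hco | hco
  · refine ⟨hco, y1, ?_⟩
    have e3 : y3 = 0 := tendsto_nhds_unique t3 (tendsto_fol₁_atBot.mono_left hco)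
    have e4 : y4 = 0 := tendsto_nhds_unique t4 (tendsto_fol₂_atBot.mono_left hco)
    have hs : Tendsto tail G atTop := tendsto_tail_atBot.mono_left hco
    have hd0 : Tendsto (fun t => Metric.infDist (pos t) K) G (𝓝 0) := by
      have := t2.mul hs.inv_tendsto_atTop
      rw [mul_zero] at this
      refine this.congr' ?_
      filter_upwards [hs.eventually_gt_atTop 0] with t ht
      simp only [Pi.inv_apply, height]
      field_simp
    have hd1 : Tendsto (fun t => Metric.infDist (pos t) K) G (𝓝 (Metric.infDist y1 K)) :=
      ((Metric.continuous_infDist_pt K).tendsto y1).comp t1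
    have hy1 : y1 ∈ K :=
      (hK.mem_iff_infDist_zero hne).2 (tendsto_nhds_unique hd1 hd0)
    -- Passing to the limit in `barrier * denominator = 1` forces `y2 < 1 / (n + 1)` for all `n`.
    have hb : ∀ n : ℕ, y5 n * max (1 / ((n : ℝ) + 1) - y2) 0 = 1 := fun n => by
      have h := (t5 n).mul (((tendsto_const_nhds (x := 1 / ((n : ℝ) + 1))).sub t2).max
        (tendsto_const_nhds (x := (0 : ℝ))) |>.add t3)
      rw [e3, add_zero] at h
      refine tendsto_nhds_unique h (tendsto_const_nhds.congr fun t => ?_)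
      exact (inv_mul_cancel₀ (barrier_den_pos K n t).ne').symm
    have hy2 : y2 = 0 := by
      refine le_antisymm (le_of_forall_pos_lt_add fun ε hε => ?_)
        (ge_of_tendsto' t2 (height_nonneg K))
      obtain ⟨n, hn⟩ := exists_nat_one_div_lt hε
      by_contra hlt
      have := hb n
      rw [max_eq_right (by linarith)] at this
      simp at this
    refine ⟨hy1, ?_⟩
    rw [curve_of_nonneg K (h0 hy1), hy2, e3, e4]
    congr
    funext n
    have := hb n
    rw [hy2, sub_zero, max_eq_left (by positivity)] at this
    exact (eq_inv_of_mul_eq_one_left this).symm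
  · exfalso
    refine not_tendsto_nhds_of_tendsto_atTop (f := pos) (l := (G : Filter ℝ)) ?_ y1 t1
    refine (tendsto_id.mono_left hco).congr' ?_
    filter_upwards [hco (eventually_ge_atTop 0)] with t ht
    exact (pos_of_nonneg ht).symm

lemma isClosed_range_curve {K : Set ℝ} (hK : IsClosed K) (hne : K.Nonempty) (h0 : K ⊆ Ici 0) :
    IsClosed (range (curve K)) := by
  rw [← closure_subset_iff_isClosed]
  intro y hy
  have : (comap (curve K) (𝓝 y)).NeBot := by
    rw [comap_neBot_iff]
    intro s hs
    obtain ⟨_, hx, x, rfl⟩ := mem_closure_iff_nhds.1 hy s hs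
    exact ⟨x, hx⟩
  have hle := Ultrafilter.of_le (comap (curve K) (𝓝 y))
  rcases ultrafilter_cases hK hne h0 _ (tendsto_iff_comap.2 hle) with ⟨t, -, h⟩ | ⟨-, k, -, h⟩
  exacts [⟨t, h⟩, ⟨k, h⟩]

lemma t2Space_induced {α Y : Type*} [TopologicalSpace Y] [T2Space Y] {f : α → Y}
    (hf : Function.Injective f) : @T2Space α (.induced f inferInstance) := by
  let _ : TopologicalSpace α := .induced f inferInstance
  exact (show IsEmbedding f from ⟨⟨rfl⟩, hf⟩).t2Space

lemma complete_induced {α Y : Type*} [TopologicalSpace Y]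
    [TopologicalSpace.IsCompletelyMetrizableSpace Y] {f : α → Y}
    (hf : Function.Injective f) (hr : IsClosed (range f)) :
    @TopologicalSpace.IsCompletelyMetrizableSpace α (.induced f inferInstance) := by
  let _ : TopologicalSpace α := .induced f inferInstance
  exact (show IsClosedEmbedding f from ⟨⟨⟨rfl⟩, hf⟩, hr⟩).IsCompletelyMetrizableSpace

lemma inL_top (K : Set ℝ) : InL (top K) := by
  refine ⟨?_, t2Space_induced (injective_curve K)⟩
  rintro U ⟨V, hV, rfl⟩
  exact hV.preimage (continuous_curve K)

lemma completelyMetrizable_top {K : Set ℝ} (hK : IsClosed K) (hne : K.Nonempty) (h0 : K ⊆ Ici 0) :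
    CompletelyMetrizable (top K) :=
  (complete_induced (injective_curve K) (isClosed_range_curve hK hne h0)).complete

/-! ### The points where the topology is strictly coarser -/

lemma nhds_top (K : Set ℝ) (x : ℝ) : @nhds ℝ (top K) x = comap (curve K) (𝓝 (curve K x)) :=
  nhds_induced _ _

lemma exists_pos_eq (x R : ℝ) : ∃ t < -R, pos t = x := by
  obtain ⟨j, hj⟩ := exists_nat_gt (|R| + |x|)
  have hpi := Real.pi_gt_three
  set a : ℝ := -(Real.pi / 2 + j * (2 * Real.pi)) with ha
  have hja : a < -(|R| + |x|) := by nlinarith [abs_nonneg R, abs_nonneg x]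
  have pa : pos a = -a := by
    have h : a ≤ 0 := by linarith [abs_nonneg R, abs_nonneg x]
    rw [pos, tail_of_nonpos h, max_eq_right h, ha, neg_neg, Real.sin_add_nat_mul_two_pi]
    simp
  have pb : pos (a - Real.pi) = a - Real.pi := by
    have h : a - Real.pi ≤ 0 := by linarith [abs_nonneg R, abs_nonneg x]
    have hs : -(a - Real.pi) = Real.pi / 2 + j * (2 * Real.pi) + Real.pi := by rw [ha]; ring
    rw [pos, tail_of_nonpos h, max_eq_right h, hs, Real.sin_add_pi, Real.sin_add_nat_mul_two_pi,
      Real.sin_pi_div_two, ha]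
    ring
  have hx : x ∈ Icc (pos (a - Real.pi)) (pos a) := by
    rw [pa, pb]
    constructor <;> linarith [abs_nonneg R, abs_nonneg x, neg_abs_le x, le_abs_self x]
  obtain ⟨t, ht, hxt⟩ :=
    intermediate_value_Icc (by linarith) continuous_pos.continuousOn hx
  exact ⟨t, by linarith [ht.2, le_abs_self R, abs_nonneg x], hxt⟩

lemma nhds_top_eq_iff {K : Set ℝ} (hK : IsClosed K) (hne : K.Nonempty) (h0 : K ⊆ Ici 0) (x : ℝ) :
    @nhds ℝ (top K) x = 𝓝 x ↔ x ∉ K := by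
  rw [nhds_top]
  constructor
  · intro h hx
    choose t ht hpt using fun n : ℕ => exists_pos_eq x n
    have hbot : Tendsto t atTop atBot := by
      refine tendsto_atBot_mono (fun n => (ht n).le) ?_
      exact tendsto_neg_atTop_atBot.comp tendsto_natCast_atTop_atTop
    have hH : ∀ n, height K (t n) = 0 := fun n => by
      rw [height, hpt, Metric.infDist_zero_of_mem hx, mul_zero]
    have h3 := tendsto_fol₁_atBot.comp hbot
    have h4 := tendsto_fol₂_atBot.comp hbot
    have hc : Tendsto (fun n => curve K (t n)) atTop (𝓝 (curve K x)) := by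
      rw [curve_of_nonneg K (h0 hx)]
      simp only [curve, barrier, hH, hpt]
      refine tendsto_const_nhds.prodMk_nhds (tendsto_const_nhds.prodMk_nhds
        (h3.prodMk_nhds (h4.prodMk_nhds (tendsto_pi_nhds.2 fun n => ?_))))
      have hn : (0 : ℝ) < 1 / ((n : ℝ) + 1) := by positivity
      rw [sub_zero, max_eq_left hn.le]
      have := (tendsto_const_nhds (x := 1 / ((n : ℝ) + 1))).add h3
      rw [add_zero] at this
      exact this.inv₀ hn.ne'
    have hx' : Tendsto t atTop (𝓝 x) := by
      rw [← h]
      exact tendsto_comap_iff.2 hc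
    exact not_tendsto_nhds_of_tendsto_atBot hbot x hx'
  · intro hx
    refine le_antisymm (le_iff_ultrafilter.2 fun G hG => ?_)
      (tendsto_iff_comap.1 ((continuous_curve K).tendsto x))
    rcases ultrafilter_cases hK hne h0 G (tendsto_iff_comap.2 hG) with ⟨t, ht, h⟩ | ⟨-, k, hk, h⟩
    · rwa [← injective_curve K h]
    · exact absurd (injective_curve K h ▸ hk) hx

/-! ### Rigidity -/

lemma exists_height_gt {K : Set ℝ} (hne : K.Nonempty) (h0 : K ⊆ Ici 0) (N R : ℝ) :
    ∃ a > R, N < height K (-a) := by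
  obtain ⟨t, ht, hp⟩ := exists_pos_eq (-1) (|R| + |N|)
  have hd : 1 ≤ Metric.infDist (-1 : ℝ) K := by
    refine (Metric.le_infDist hne).2 fun y hy => ?_
    have : (0 : ℝ) ≤ y := h0 hy
    rw [Real.dist_eq, abs_sub_comm]
    exact le_trans (by linarith) (le_abs_self _)
  refine ⟨-t, by linarith [le_abs_self R, abs_nonneg N], ?_⟩
  have ht0 : t ≤ 0 := by linarith [abs_nonneg R, abs_nonneg N]
  rw [neg_neg, height, hp, tail_of_nonpos ht0]
  nlinarith [le_abs_self N, abs_nonneg R]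

lemma mem_Ioo_iff_fol {a b x : ℝ} (ha : 0 < a) :
    x ∈ Ioo (-b) (-a) ↔ 0 < fol₁ x ∧ a * fol₁ x < fol₂ x ∧ fol₂ x < b * fol₁ x := by
  rw [fol₂_eq]
  constructor
  · rintro ⟨h1, h2⟩
    have ht : tail x = -x := tail_of_nonpos (by linarith)
    have hp : 0 < fol₁ x := fol₁_pos (by linarith)
    refine ⟨hp, ?_, ?_⟩ <;> rw [ht] <;> gcongr <;> linarith
  · rintro ⟨hp, h1, h2⟩
    have h1 := lt_of_mul_lt_mul_right h1 hp.le
    have h2 := lt_of_mul_lt_mul_right h2 hp.le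
    have hx : x ≤ 0 := by
      by_contra hx
      rw [tail_of_nonneg (by linarith)] at h1
      linarith
    rw [tail_of_nonpos hx] at h1 h2
    constructor <;> linarith

/-- A path in the curve is a path in the parameter line. On a compact interval the height along
the path is bounded, so the path avoids parameters `-a`, `-b` of large height; the part
of the curve between two such parameters is clopen for the path, which therefore cannot
run down the tail. -/
lemma continuous_of_curve_comp {K : Set ℝ} (hK : IsClosed K) (hne : K.Nonempty) (h0 : K ⊆ Ici 0)
    {h : ℝ → ℝ} (hc : Continuous fun t => curve K (h t)) : Continuous h := by
  rw [continuous_iff_continuousAt]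
  intro x
  have c2 : Continuous fun t => height K (h t) := hc.snd.fst
  have c3 : Continuous fun t => fol₁ (h t) := hc.snd.snd.fst
  have c4 : Continuous fun t => fol₂ (h t) := hc.snd.snd.snd.fst
  obtain ⟨N, hN⟩ := (isCompact_Icc (a := x - 1) (b := x + 1)).bddAbove_image c2.continuousOn
  have hN' : ∀ t ∈ Icc (x - 1) (x + 1), height K (h t) ≤ N := fun t ht => hN ⟨t, ht, rfl⟩
  obtain ⟨a, ha, hNa⟩ := exists_height_gt hne h0 N |h x|
  have ha0 : 0 < a := (abs_nonneg _).trans_lt ha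
  have hlow : ∀ t ∈ Icc (x - 1) (x + 1), -a ≤ h t := by
    intro t₀ ht₀
    by_contra hlt
    push Not at hlt
    obtain ⟨b, hb, hNb⟩ := exists_height_gt hne h0 N (-h t₀)
    have hU : IsOpen (h ⁻¹' Ioo (-b) (-a)) := by
      have : h ⁻¹' Ioo (-b) (-a) = {t | 0 < fol₁ (h t)} ∩
          ({t | a * fol₁ (h t) < fol₂ (h t)} ∩ {t | fol₂ (h t) < b * fol₁ (h t)}) := by
        ext t
        exact mem_Ioo_iff_fol ha0
      rw [this]
      exact (isOpen_lt continuous_const c3).inter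
        ((isOpen_lt (continuous_const.mul c3) c4).inter (isOpen_lt c4 (continuous_const.mul c3)))
    have hV : IsClosed (h ⁻¹' Icc (-b) (-a)) := by
      have : h ⁻¹' Icc (-b) (-a) = (fun t => curve K (h t)) ⁻¹' (curve K '' Icc (-b) (-a)) := by
        ext t
        simp only [mem_preimage, (injective_curve K).mem_set_image]
      rw [this]
      exact (isCompact_Icc.image (continuous_curve K)).isClosed.preimage hc
    have hcov : Icc (x - 1) (x + 1) ⊆ h ⁻¹' Ioo (-b) (-a) ∪ (h ⁻¹' Icc (-b) (-a))ᶜ := by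
      intro t ht
      by_cases hm : h t ∈ Icc (-b) (-a)
      · refine .inl ⟨lt_of_le_of_ne hm.1 fun e => ?_, lt_of_le_of_ne hm.2 fun e => ?_⟩
        · have := hN' t ht
          rw [← e] at this
          linarith
        · have := hN' t ht
          rw [e] at this
          linarith
      · exact .inr hm
    have hdis : Icc (x - 1) (x + 1) ∩ (h ⁻¹' Ioo (-b) (-a) ∩ (h ⁻¹' Icc (-b) (-a))ᶜ) = ∅ := by
      ext t
      simp only [mem_inter_iff, mem_empty_iff_false, iff_false]
      rintro ⟨-, h1, h2⟩
      exact h2 (Ioo_subset_Icc_self h1)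
    rcases isPreconnected_iff_subset_of_disjoint.1 isPreconnected_Icc _ _ hU hV.isOpen_compl hcov
      hdis with hs | hs
    · have := (hs (show x ∈ Icc (x - 1) (x + 1) by constructor <;> linarith)).2
      linarith [neg_abs_le (h x)]
    · exact hs ht₀ ⟨by linarith, hlt.le⟩
  refine (tendsto_iff_ultrafilter _ _ _).2 fun G hG => ?_
  have hT : Tendsto (curve K) (G.map h) (𝓝 (curve K (h x))) := by
    rw [Ultrafilter.coe_map, tendsto_map'_iff]
    exact (hc.tendsto x).mono_left hG
  rcases ultrafilter_cases hK hne h0 _ hT with ⟨t, ht, e⟩ | ⟨hbot, -⟩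
  · rw [← injective_curve K e]
    exact ht
  · exfalso
    have h1 : ∀ᶠ t in (G : Filter ℝ), h t < -a := hbot (eventually_lt_atBot (-a))
    have h2 : ∀ᶠ t in (G : Filter ℝ), t ∈ Icc (x - 1) (x + 1) :=
      hG (Icc_mem_nhds (by linarith) (by linarith))
    obtain ⟨t, ht1, ht2⟩ := (h1.and h2).exists
    linarith [hlow t ht2]

/-- A homeomorphism between two of the spaces is a Euclidean homeomorphism that respects the
sets of coarse points. -/
lemma homeomorph_rigid {K L : Set ℝ} (hK : IsClosed K) (hKne : K.Nonempty) (hK0 : K ⊆ Ici 0)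
    (hL : IsClosed L) (hLne : L.Nonempty) (hL0 : L ⊆ Ici 0)
    (e : @Homeomorph ℝ ℝ (top K) (top L)) :
    ∃ h : ℝ ≃ₜ ℝ, ∀ x, x ∈ K ↔ h x ∈ L := by
  let f : ℝ ≃ ℝ := @Homeomorph.toEquiv _ _ (top K) (top L) e
  have hid : ∀ M : Set ℝ, @Continuous ℝ ℝ inferInstance (top M) id := fun M =>
    continuous_induced_rng.2 (continuous_curve M)
  have cF : ∀ M : Set ℝ, @Continuous _ _ (top M) _ (curve M) := fun M => continuous_induced_dom
  have e1 : @Continuous _ _ (top K) (top L) f := @Homeomorph.continuous_toFun _ _ (top K) (top L) e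
  have e2 : @Continuous _ _ (top L) (top K) f.symm :=
    @Homeomorph.continuous_invFun _ _ (top K) (top L) e
  have c1 : Continuous f := continuous_of_curve_comp hL hLne hL0
    (@Continuous.comp _ _ _ _ (top K) _ _ _
      (@Continuous.comp _ _ _ (top K) (top L) _ _ _ (cF L) e1) (hid K))
  have c2 : Continuous f.symm := continuous_of_curve_comp hK hKne hK0
    (@Continuous.comp _ _ _ _ (top L) _ _ _
      (@Continuous.comp _ _ _ (top L) (top K) _ _ _ (cF K) e2) (hid L))
  let h : ℝ ≃ₜ ℝ := ⟨f, c1, c2⟩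
  refine ⟨h, fun x => not_iff_not.1 ?_⟩
  rw [← nhds_top_eq_iff hK hKne hK0, ← nhds_top_eq_iff hL hLne hL0]
  have m1 : map h (@nhds ℝ (top K) x) = @nhds ℝ (top L) (h x) :=
    @Homeomorph.map_nhds_eq ℝ ℝ (top K) (top L) e x
  rw [← m1, ← h.map_nhds_eq x]
  exact (map_injective h.injective).eq_iff.symm

/-! ### Coding subsets of `ℕ` -/

/-- The closed set coding `A`: the component starting at `n` is `[n, n + 1/2]` if `n ∈ A`, and
`{n}` otherwise. -/
def code (A : Set ℕ) : Set ℝ := {x | ∃ n : ℕ, (n : ℝ) ≤ x ∧ (x = n ∨ n ∈ A ∧ x ≤ n + 1 / 2)}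

lemma natCast_mem_code (A : Set ℕ) (n : ℕ) : (n : ℝ) ∈ code A := ⟨n, le_rfl, .inl rfl⟩

lemma code_nonneg (A : Set ℕ) : code A ⊆ Ici 0 := fun _ ⟨n, hn, _⟩ => (Nat.cast_nonneg n).trans hn

lemma isClosed_code (A : Set ℕ) : IsClosed (code A) := by
  have : code A = ⋃ n : ℕ, {x : ℝ | (n : ℝ) ≤ x ∧ (x = n ∨ n ∈ A ∧ x ≤ n + 1 / 2)} := by
    ext x; simp [code]
  rw [this]
  refine LocallyFinite.isClosed_iUnion (fun x => ?_) fun n => ?_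
  · refine ⟨Iio (x + 1), Iio_mem_nhds (by linarith), ?_⟩
    refine (finite_le_nat ⌈x + 1⌉₊).subset ?_
    rintro n ⟨z, ⟨hz, -⟩, hz'⟩
    have : (n : ℝ) ≤ ⌈x + 1⌉₊ := hz.trans (hz'.le.trans (Nat.le_ceil _))
    exact_mod_cast this
  · refine (isClosed_le continuous_const continuous_id).inter (IsClosed.union ?_ ?_)
    · exact isClosed_singleton
    · by_cases hn : n ∈ A
      · have h : {x : ℝ | n ∈ A ∧ x ≤ n + 1 / 2} = Iic ((n : ℝ) + 1 / 2) := by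
          ext x
          exact and_iff_right hn
        change IsClosed {x : ℝ | n ∈ A ∧ x ≤ n + 1 / 2}
        exact h.symm ▸ (isClosed_Iic : IsClosed (Iic ((n : ℝ) + 1 / 2)))
      · have h : {x : ℝ | n ∈ A ∧ x ≤ n + 1 / 2} = ∅ := by
          ext x
          exact iff_of_false (fun hx => hn hx.1) id
        change IsClosed {x : ℝ | n ∈ A ∧ x ≤ n + 1 / 2}
        exact h.symm ▸ isClosed_empty

/-- The points of `code A` isolated from the left are the natural numbers. -/
lemma left_isolated_iff (A : Set ℕ) (x : ℝ) :
    (x ∈ code A ∧ ∃ y < x, ∀ z, y < z → z < x → z ∉ code A) ↔ ∃ n : ℕ, (n : ℝ) = x := by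
  constructor
  · rintro ⟨⟨n, hn, hx⟩, y, hy, hz⟩
    rcases hx with hx | ⟨hA, hx⟩
    · exact ⟨n, hx.symm⟩
    · refine ⟨n, le_antisymm hn (not_lt.1 fun hlt => ?_)⟩
      obtain ⟨z, hz1, hz2⟩ := exists_between (max_lt hy hlt)
      obtain ⟨hz1, hz3⟩ := max_lt_iff.1 hz1
      exact hz z hz1 hz2 ⟨n, hz3.le, .inr ⟨hA, by linarith⟩⟩
  · rintro ⟨n, rfl⟩
    refine ⟨natCast_mem_code A n, n - 1 / 2, by linarith, ?_⟩
    rintro z h1 h2 ⟨m, hm, hm'⟩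
    have hmn : m + 1 ≤ n := by
      have : (m : ℝ) < n := by linarith
      exact_mod_cast this
    have hmn' : (m : ℝ) + 1 ≤ n := by exact_mod_cast hmn
    rcases hm' with hm' | ⟨-, hm'⟩ <;> linarith

/-- Membership in `A` is read off from whether `n` is interior to `code A` from the right. -/
lemma mem_iff_right_interior (A : Set ℕ) (n : ℕ) :
    n ∈ A ↔ ∃ y > (n : ℝ), ∀ z, (n : ℝ) < z → z < y → z ∈ code A := by
  constructor
  · intro hn
    exact ⟨n + 1 / 2, by linarith, fun z h1 h2 => ⟨n, h1.le, .inr ⟨hn, h2.le⟩⟩⟩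
  · rintro ⟨y, hy, hz⟩
    have h1 : (n : ℝ) < n + 1 := by linarith
    obtain ⟨z, hz1, hz2⟩ := exists_between (lt_min hy h1)
    obtain ⟨hz2, hz3⟩ := lt_min_iff.1 hz2
    obtain ⟨m, hm, hm'⟩ := hz z hz1 hz2
    have hmn : m < n + 1 := by
      have : (m : ℝ) < (n + 1 : ℕ) := by push_cast; linarith
      exact_mod_cast this
    have hnm : n ≤ m := by
      by_contra hlt
      have : (m : ℝ) + 1 ≤ n := by exact_mod_cast not_le.1 hlt
      rcases hm' with hm' | ⟨-, hm'⟩ <;> linarith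
    obtain rfl : m = n := by omega
    rcases hm' with hm' | ⟨h, -⟩
    · linarith
    · exact h

lemma code_rigid {A B : Set ℕ} (h : ℝ ≃ₜ ℝ) (hAB : ∀ x, x ∈ code A ↔ h x ∈ code B) : A = B := by
  have hmono : StrictMono h := by
    rcases h.continuous.strictMono_of_inj h.injective with hm | hm
    · exact hm
    · -- An antitone map would bound `code B` above by `h 0`.
      exfalso
      obtain ⟨n, hn⟩ := exists_nat_gt (h 0)
      obtain ⟨x, hx⟩ := h.surjective (n : ℝ)
      have hxA : x ∈ code A := (hAB x).2 (hx ▸ natCast_mem_code B n)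
      have := hm.antitone (code_nonneg A hxA : (0 : ℝ) ≤ x)
      linarith
  have hlt : ∀ {x y}, h x < h y ↔ x < y := hmono.lt_iff_lt
  have hleft : ∀ x, (∃ n : ℕ, (n : ℝ) = x) ↔ ∃ n : ℕ, (n : ℝ) = h x := fun x => by
    rw [← left_isolated_iff A, ← left_isolated_iff B, hAB]
    refine and_congr Iff.rfl (Iff.trans ?_ h.surjective.exists.symm)
    refine exists_congr fun y => and_congr hlt.symm ?_
    refine Iff.trans ?_ h.surjective.forall.symm
    simp only [hlt, hAB]
  choose e he using fun n : ℕ => (hleft n).1 ⟨n, rfl⟩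
  have hemono : StrictMono e := fun m n hmn => by
    have : h m < h n := hlt.2 (by exact_mod_cast hmn)
    rw [← he, ← he] at this
    exact_mod_cast this
  have hesurj : Function.Surjective e := fun n => by
    obtain ⟨x, hx⟩ := h.surjective (n : ℝ)
    obtain ⟨m, rfl⟩ := (hleft x).2 ⟨n, hx.symm⟩
    refine ⟨m, ?_⟩
    have := (he m).trans hx
    exact_mod_cast this
  have hfix : ∀ n : ℕ, h n = n := fun n => by
    have := Subsingleton.elim (hemono.orderIsoOfSurjective e hesurj) (OrderIso.refl ℕ)
    have hn : e n = n := DFunLike.congr_fun this n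
    rw [← he, hn]
  ext n
  rw [mem_iff_right_interior A, mem_iff_right_interior B]
  have hn : ∀ z, (n : ℝ) < h z ↔ (n : ℝ) < z := fun z => by
    rw [← hlt (x := (n : ℝ)) (y := z), hfix]
  refine Iff.trans ?_ h.surjective.exists.symm
  refine exists_congr fun y => and_congr (hn y).symm ?_
  refine Iff.trans ?_ h.surjective.forall.symm
  simp only [hn, hlt, hAB]

lemma eq_of_homeomorph {A B : Set ℕ} (e : @Homeomorph ℝ ℝ (top (code A)) (top (code B))) :
    A = B := by
  obtain ⟨h, hh⟩ := homeomorph_rigid (isClosed_code A) ⟨_, natCast_mem_code A 0⟩ (code_nonneg A)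
    (isClosed_code B) ⟨_, natCast_mem_code B 0⟩ (code_nonneg B) e
  exact code_rigid h hh

end

end CurveTop

/-- There is 𝒯 ⊆ 𝓛 with |𝒯| = 𝔠 of topologies giving completely
metrizable, mutually non-homeomorphic spaces. -/
theorem statement_9 :
    ∃ 𝒯 : Set (TopologicalSpace ℝ),
      Cardinal.mk ↥𝒯 = Cardinal.continuum ∧
      (∀ τ ∈ 𝒯, InL τ ∧ CompletelyMetrizable τ) ∧
      ∀ τ ∈ 𝒯, ∀ τ' ∈ 𝒯, τ ≠ τ' → IsEmpty (@Homeomorph ℝ ℝ τ τ') := by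
  have inj : Function.Injective fun A : Set ℕ => CurveTop.top (CurveTop.code A) := by
    intro A B (hAB : CurveTop.top (CurveTop.code A) = CurveTop.top (CurveTop.code B))
    refine CurveTop.eq_of_homeomorph ?_
    rw [hAB]
    exact @Homeomorph.refl ℝ (CurveTop.top (CurveTop.code B))
  refine ⟨range fun A : Set ℕ => CurveTop.top (CurveTop.code A), ?_, ?_, ?_⟩
  · rw [Cardinal.mk_range_eq _ inj]
    simp
  · rintro _ ⟨A, rfl⟩
    exact ⟨CurveTop.inL_top _, CurveTop.completelyMetrizable_top (CurveTop.isClosed_code A)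
      ⟨_, CurveTop.natCast_mem_code A 0⟩ (CurveTop.code_nonneg A)⟩
  · rintro _ ⟨A, rfl⟩ _ ⟨B, rfl⟩ hne
    exact ⟨fun e => hne (by rw [CurveTop.eq_of_homeomorph e])⟩
end

section
/- There exists a family 𝒯 ⊆ 𝓛 with |𝒯| = c such that for each τ ∈ 𝒯 the space (ℝ, τ) is a metrizable space of first category, and for distinct τ, τ' ∈ 𝒯 the spaces (ℝ, τ) and (ℝ, τ') are not homeomorphic. -/
/-!
For every `A : Set ℕ` a continuous injection `windingMap A` of `ℝ` into the metrizable space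
`(ℕ → ℝ/ℤ) × ℝ` is given, and the topology it induces on `ℝ` is used.  The first component is the
dyadic winding `t ↦ (t / 2 ^ k mod 1)ₖ`, the second one is `u(t) = height A (arsinh t)`, the
truncated distance from `arsinh t` to the closed set
`pattern A = (-∞, 0] ∪ ⋃ₙ [4(n+1), 4(n+1) + 1_A(n)]`.

*Recurrence.*  The function `u` oscillates between `0` and `1` ever more slowly as `t → +∞`, so it
takes nearly any prescribed value of `[0, 1]` at arbitrarily large points of any class
modulo `2 ^ j`.  Hence every point is a cluster point of the end `+∞` (`limTop_toLeaf`).  In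
particular the compact sets `[-n, n]` have empty interior and the space is of first category.
As `u` vanishes on `(-∞, 0]`, the cluster points of the end `-∞` are exactly the zeros of `u`, that
is, the points `x` with `arsinh x ∈ pattern A` (`mem_limBot_toLeaf`).

*Rigidity.*  If a Hausdorff topology on `ℝ` is coarser than the Euclidean one and neither end
converges, then each of its paths is continuous for the Euclidean topology
(`continuous_symm_comp`): locally, a path stays in an open set `W` all of whose order components
are bounded, these components are countably many and relatively closed in `W`, and an interval is
not a countable disjoint union of at least two nonempty closed sets (Sierpiński).  Therefore a
homeomorphism between two of the spaces is a monotone bijection of `ℝ`.  It cannot be decreasing,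
as all points are cluster points of `+∞` but not all are cluster points of `-∞`; being increasing,
it carries the cluster set of `-∞` to the cluster set of `-∞`.  So it yields an increasing
bijection of `ℝ` mapping `pattern A` onto `pattern B`; it fixes the left endpoints `4(n+1)`, and
`n ∈ A` holds exactly when the component starting there is nondegenerate, whence `A = B`.
-/

open Topology Set

open Filter

/-! ### Sierpiński's theorem on the line -/

/-- Sierpiński's theorem for `ℝ`: a function with countable range and closed fibers is constant.
The set `B` of points interior to no fiber is closed; were it nonempty, Baire's theorem would give
an interval `J` meeting `B` inside a single fiber, and then `J` would lie in that fiber. -/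
theorem eq_of_countable_range_of_isClosed_fiber {ι : Type*} (κ : ℝ → ι)
    (hc : (range κ).Countable) (hcl : ∀ i, IsClosed (κ ⁻¹' {i})) (s t : ℝ) : κ s = κ t := by
  set B : Set ℝ := (⋃ i, interior (κ ⁻¹' {i}))ᶜ with hB
  have hBcl : IsClosed B := (isOpen_iUnion fun i => isOpen_interior).isClosed_compl
  -- Within `J`, a fiber other than that of `i` avoids `B`, so it is relatively clopen.
  have key : ∀ J : Set ℝ, IsPreconnected J → ∀ i, (J ∩ B ⊆ κ ⁻¹' {i}) →
      (J ∩ κ ⁻¹' {i}).Nonempty → J ⊆ κ ⁻¹' {i} := by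
    intro J hJ i hi hne
    by_contra hnot
    obtain ⟨y, hyJ, hy⟩ := not_subset.1 hnot
    have hsub : J ∩ κ ⁻¹' {κ y} ⊆ interior (κ ⁻¹' {κ y}) := by
      rintro z ⟨hzJ, hz⟩
      by_contra hzi
      have hzB : z ∈ B := by
        rw [hB, mem_compl_iff, mem_iUnion]
        rintro ⟨l, hl⟩
        have : κ z = l := (interior_subset : _ ⊆ κ ⁻¹' {l}) hl
        have h2 : κ z = κ y := hz
        rw [← this, h2] at hl
        exact hzi hl
      have h1 : κ z = i := hi ⟨hzJ, hzB⟩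
      have h2 : κ z = κ y := hz
      exact hy (h2.symm.trans h1)
    have := hJ (interior (κ ⁻¹' {κ y})) ((κ ⁻¹' {κ y})ᶜ) isOpen_interior
      (hcl _).isOpen_compl (fun z hz => by
        by_cases h : z ∈ κ ⁻¹' {κ y}
        · exact Or.inl (hsub ⟨hz, h⟩)
        · exact Or.inr h) ⟨y, hyJ, hsub ⟨hyJ, rfl⟩⟩
      (by
        obtain ⟨x, hxJ, hx⟩ := hne
        refine ⟨x, hxJ, fun hxy => hy ?_⟩
        have h1 : κ x = i := hx
        have h2 : κ x = κ y := hxy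
        exact h2.symm.trans h1)
    obtain ⟨z, -, hz1, hz2⟩ := this
    exact hz2 (interior_subset hz1)
  rcases B.eq_empty_or_nonempty with hBe | hBn
  · have := key univ isPreconnected_univ (κ t) (by simp [hBe])
      ⟨t, mem_univ _, rfl⟩ (mem_univ s)
    exact this
  · exfalso
    have : Nonempty B := hBn.to_subtype
    have : CompleteSpace B := hBcl.completeSpace_coe
    have hcr : Countable (range κ) := hc.to_subtype
    obtain ⟨i, x, hx⟩ := nonempty_interior_of_iUnion_of_closed
      (f := fun i : range κ => ((↑) : B → ℝ) ⁻¹' (κ ⁻¹' {i.1}))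
      (fun i => (hcl i).preimage continuous_subtype_val)
      (by
        ext z
        simp only [mem_iUnion, mem_univ, iff_true]
        exact ⟨⟨κ z, mem_range_self _⟩, rfl⟩)
    obtain ⟨O, hO, hOeq⟩ := isOpen_induced_iff.1
      (isOpen_interior (s := ((↑) : B → ℝ) ⁻¹' (κ ⁻¹' {i.1})))
    have hxO : (x : ℝ) ∈ O := by
      have : x ∈ ((↑) : B → ℝ) ⁻¹' O := hOeq ▸ hx
      exact this
    obtain ⟨ε, hε, hball⟩ := Metric.isOpen_iff.1 hO _ hxO
    have hJ : Metric.ball (x : ℝ) ε ⊆ κ ⁻¹' {i.1} := by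
      refine key _ (convex_ball _ _).isPreconnected i.1 ?_
        ⟨x, Metric.mem_ball_self hε, ?_⟩
      · rintro z ⟨hz, hzB⟩
        have : (⟨z, hzB⟩ : B) ∈ ((↑) : B → ℝ) ⁻¹' O := hball hz
        rw [hOeq] at this
        exact (interior_subset : _ ⊆ ((↑) : B → ℝ) ⁻¹' (κ ⁻¹' {i.1})) this
      · exact (interior_subset : _ ⊆ ((↑) : B → ℝ) ⁻¹' (κ ⁻¹' {i.1})) hx
    have hxi : (x : ℝ) ∈ interior (κ ⁻¹' {i.1}) :=
      mem_interior.2 ⟨_, hJ, Metric.isOpen_ball, Metric.mem_ball_self hε⟩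
    exact x.2 (mem_iUnion.2 ⟨i.1, hxi⟩)

/-! ### Hausdorff topologies coarser than the Euclidean one -/

theorem mapClusterPt_transfer {Z Z' : Type*} [TopologicalSpace Z] [TopologicalSpace Z'] (e : ℝ → Z)
    (e' : ℝ → Z') (h : Z → Z') (hh : Continuous h) (k : ℝ → ℝ) (hk : ∀ x, e' (k x) = h (e x))
    (l l' : Filter ℝ) (hl : Tendsto k l l') (x : ℝ) (hx : MapClusterPt (e x) l e) :
    MapClusterPt (e' (k x)) l' e' := by
  have h1 : MapClusterPt (h (e x)) l (h ∘ e) := hx.continuousAt_comp hh.continuousAt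
  have h2 : h ∘ e = e' ∘ k := funext fun x => (hk x).symm
  rw [← hk, h2] at h1
  exact ClusterPt.mono h1 (by rw [← Filter.map_map]; exact map_mono hl)

section Line

variable {Y : Type*} [TopologicalSpace Y] [T2Space Y]

/-- A path `ψ` that stays in a Euclidean-open set `W` whose complement is unbounded in both
directions is continuous for the Euclidean topology. The coarser topology is that of `Y`,
transported to `ℝ` along `e`. -/
theorem continuous_symm_comp_of_mem (e : ℝ ≃ Y) (he : Continuous e) (W : Set ℝ)
    (hW : IsOpen W) (htop : ∀ x, ∃ q > x, q ∉ W) (hbot : ∀ x, ∃ p < x, p ∉ W)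
    (ψ : ℝ → Y) (hψ : Continuous ψ) (hmem : ∀ s, e.symm (ψ s) ∈ W) :
    Continuous (e.symm ∘ ψ) := by
  have hK : ∀ K : Set ℝ, IsCompact K → IsClosed ((e.symm ∘ ψ) ⁻¹' K) := by
    intro K hK
    have : (e.symm ∘ ψ) ⁻¹' K = ψ ⁻¹' (e '' K) := by
      rw [preimage_comp, e.image_eq_preimage_symm]
    rw [this]
    exact (hK.image he).isClosed.preimage hψ
  have hopen : ∀ x, IsOpen (ordConnectedComponent W x) := by
    intro x
    rw [isOpen_iff_mem_nhds]
    intro y hy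
    have hyW : y ∈ W := ordConnectedComponent_subset hy
    rw [ordConnectedComponent_eq (mem_ordConnectedComponent.1 hy)]
    exact ordConnectedComponent_mem_nhds.2 (hW.mem_nhds hyW)
  have hcpt : ∀ x, IsCompact (closure (ordConnectedComponent W x)) := by
    intro x
    obtain ⟨q, hq, hqW⟩ := htop x
    obtain ⟨p, hp, hpW⟩ := hbot x
    have : ordConnectedComponent W x ⊆ Icc p q := by
      intro y hy
      have hs : uIcc x y ⊆ W := mem_ordConnectedComponent.1 hy
      constructor
      · by_contra! h
        exact hpW (hs (by rw [mem_uIcc]; right; constructor <;> linarith))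
      · by_contra! h
        exact hqW (hs (by rw [mem_uIcc]; left; constructor <;> linarith))
    exact isCompact_Icc.of_isClosed_subset isClosed_closure (closure_minimal this isClosed_Icc)
  have heq : ∀ x y, y ∈ ordConnectedComponent W x →
      ordConnectedComponent W x = ordConnectedComponent W y := fun x y hy =>
    ordConnectedComponent_eq (mem_ordConnectedComponent.1 hy)
  have hclos : ∀ x y, y ∈ W → y ∈ closure (ordConnectedComponent W x) →
      y ∈ ordConnectedComponent W x := by
    intro x y hyW hy
    obtain ⟨z, hz1, hz2⟩ := mem_closure_iff.1 hy _ (hopen y) (self_mem_ordConnectedComponent.2 hyW)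
    rw [heq x z hz2, ← heq y z hz1]
    exact self_mem_ordConnectedComponent.2 hyW
  have hconst := eq_of_countable_range_of_isClosed_fiber
    (fun s => ordConnectedComponent W (e.symm (ψ s))) (by
      refine (countable_range (fun q : ℚ => ordConnectedComponent W (q : ℝ))).mono ?_
      rintro _ ⟨s, rfl⟩
      obtain ⟨q, hq⟩ := Rat.denseRange_cast.exists_mem_open (hopen (e.symm (ψ s)))
        ⟨_, self_mem_ordConnectedComponent.2 (hmem s)⟩
      exact ⟨q, (heq _ _ hq).symm⟩) (by
      intro C
      by_cases hC : ∃ s, ordConnectedComponent W (e.symm (ψ s)) = C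
      · obtain ⟨s, rfl⟩ := hC
        convert hK _ (hcpt (e.symm (ψ s))) using 1
        ext r
        simp only [mem_preimage, mem_singleton_iff, Function.comp]
        constructor
        · intro h
          rw [← h]
          exact subset_closure (self_mem_ordConnectedComponent.2 (hmem r))
        · intro h
          exact (heq _ _ (hclos _ _ (hmem r) h)).symm
      · convert isClosed_empty
        ext r
        simp only [mem_preimage, mem_singleton_iff, mem_empty_iff_false, iff_false]
        exact fun h => hC ⟨r, h⟩)
  rw [continuous_iff_isClosed]
  intro Z hZ
  convert hK _ ((hcpt (e.symm (ψ 0))).inter_left hZ) using 1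
  ext r
  simp only [mem_preimage, mem_inter_iff, Function.comp]
  refine ⟨fun h => ⟨h, subset_closure ?_⟩, fun h => h.1⟩
  have := hconst 0 r
  rw [this]
  exact self_mem_ordConnectedComponent.2 (hmem r)

/-- If neither end of the line converges in `Y`, every path in `Y` is continuous for the Euclidean
topology. -/
theorem continuous_symm_comp (e : ℝ ≃ Y) (he : Continuous e)
    (htop : ∀ y, ¬ Tendsto e atTop (𝓝 y)) (hbot : ∀ y, ¬ Tendsto e atBot (𝓝 y))
    (φ : ℝ → Y) (hφ : Continuous φ) : Continuous (e.symm ∘ φ) := by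
  rw [continuous_iff_continuousAt]
  intro s
  have h1 := htop (φ s)
  have h2 := hbot (φ s)
  rw [tendsto_def] at h1 h2
  push Not at h1 h2
  obtain ⟨V₁, hV₁, hV₁'⟩ := h1
  obtain ⟨V₂, hV₂, hV₂'⟩ := h2
  obtain ⟨V, hVsub, hVo, hsV⟩ := mem_nhds_iff.1 (inter_mem hV₁ hV₂)
  obtain ⟨ε, hε, hball⟩ := Metric.isOpen_iff.1 (hVo.preimage hφ) s hsV
  have hab : s - ε / 2 ≤ s + ε / 2 := by linarith
  have hψ := continuous_symm_comp_of_mem e he (e ⁻¹' V) (hVo.preimage he)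
    (by
      intro x
      by_contra! h
      exact hV₁' (mem_of_superset (Ioi_mem_atTop x) fun q hq => (hVsub (h q hq)).1))
    (by
      intro x
      by_contra! h
      exact hV₂' (mem_of_superset (Iio_mem_atBot x) fun q hq => (hVsub (h q hq)).2))
    (fun r => φ (projIcc _ _ hab r))
    (hφ.comp (continuous_subtype_val.comp continuous_projIcc))
    (by
      intro r
      simp only [mem_preimage, Equiv.apply_symm_apply]
      apply hball
      have := (projIcc _ _ hab r).2
      rw [Metric.mem_ball, Real.dist_eq, abs_lt]
      constructor <;> linarith [this.1, this.2])
  refine hψ.continuousAt.congr ?_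
  filter_upwards [Ioo_mem_nhds (show s - ε / 2 < s by linarith) (show s < s + ε / 2 by linarith)]
    with r hr
  simp only [Function.comp]
  rw [projIcc_of_mem hab ⟨hr.1.le, hr.2.le⟩]

/-- The points of the line that are cluster points, in `Y`, of the end `-∞`. -/
def limBot (e : ℝ ≃ Y) : Set ℝ := {x | MapClusterPt (e x) atBot e}

/-- The points of the line that are cluster points, in `Y`, of the end `+∞`. -/
def limTop (e : ℝ ≃ Y) : Set ℝ := {x | MapClusterPt (e x) atTop e}

theorem not_tendsto_of_cluster (e : ℝ ≃ Y) (l : Filter ℝ) (x x' : ℝ) (hne : x ≠ x')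
    (hx : MapClusterPt (e x) l e) (hx' : MapClusterPt (e x') l e) (y : Y) :
    ¬ Tendsto e l (𝓝 y) := by
  intro h
  have key : ∀ z, MapClusterPt (e z) l e → e z = y := by
    intro z hz
    have : ClusterPt (e z) (𝓝 y) := ClusterPt.mono hz h
    exact eq_of_nhds_neBot this
  exact hne (e.injective ((key x hx).trans (key x' hx').symm))

theorem not_tendsto_ends (e : ℝ ≃ Y) (ht : limTop e = univ) (hb : (limBot e).Nontrivial) :
    (∀ y, ¬ Tendsto e atTop (𝓝 y)) ∧ (∀ y, ¬ Tendsto e atBot (𝓝 y)) := by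
  have hu : ∀ x, x ∈ limTop e := fun x => ht ▸ mem_univ x
  obtain ⟨x, hx, x', hx', hne⟩ := hb
  exact ⟨not_tendsto_of_cluster e _ 0 1 zero_ne_one (hu 0) (hu 1),
    not_tendsto_of_cluster e _ x x' hne hx hx'⟩

end Line

/-- A homeomorphism of the coarser topologies comes from an increasing bijection of `ℝ` that
preserves the cluster set of `-∞`. -/
theorem exists_orderIso {Y Y' : Type*} [TopologicalSpace Y] [TopologicalSpace Y'] [T2Space Y']
    (e : ℝ ≃ Y) (e' : ℝ ≃ Y') (he : Continuous e)
    (he' : Continuous e') (ht : limTop e = univ) (ht' : limTop e' = univ)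
    (hb' : (limBot e').Nontrivial) (hbu' : limBot e' ≠ univ)
    (h : Y ≃ₜ Y') : ∃ k : ℝ ≃o ℝ, ∀ x, x ∈ limBot e ↔ k x ∈ limBot e' := by
  obtain ⟨hT, hB⟩ := not_tendsto_ends e' ht' hb'
  set k : ℝ ≃ ℝ := (e.trans h.toEquiv).trans e'.symm with hkdef
  have hk : ∀ x, e' (k x) = h (e x) := fun x => by simp [hkdef]
  have hk' : ∀ x, e (k.symm x) = h.symm (e' x) := fun x => by simp [hkdef]
  have hc : Continuous k := continuous_symm_comp e' he' hT hB (h ∘ e) (h.continuous.comp he)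
  rcases hc.strictMono_of_inj k.injective with hm | ha
  · let K : ℝ ≃o ℝ := hm.orderIsoOfSurjective k k.surjective
    have hKs : ∀ x, K.symm x = k.symm x := fun x => by
      apply K.injective
      rw [K.apply_symm_apply]
      exact (k.apply_symm_apply x).symm
    refine ⟨K, fun x => ⟨fun hx => ?_, fun hx => ?_⟩⟩
    · exact mapClusterPt_transfer e e' h h.continuous k hk _ _ K.tendsto_atBot x hx
    · have := mapClusterPt_transfer e' e h.symm h.symm.continuous k.symm hk' atBot atBot
        (by simpa only [funext hKs] using K.symm.tendsto_atBot) (K x) hx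
      rw [← hKs, K.symm_apply_apply] at this
      exact this
  -- A decreasing map would carry `limTop e = univ` into `limBot e'`.
  · exfalso
    apply hbu'
    rw [eq_univ_iff_forall]
    intro x
    have hx : k.symm x ∈ limTop e := ht ▸ mem_univ _
    have := mapClusterPt_transfer e e' h h.continuous k hk atTop atBot
      (tendsto_atTop_atBot_of_antitone ha.antitone fun b => ⟨k.symm b, by simp⟩) _ hx
    rw [k.apply_symm_apply] at this
    exact this

/-! ### The closed sets encoding subsets of `ℕ` -/

/-- The closed set `(-∞, 0] ∪ ⋃ₙ [4(n+1), 4(n+1) + 1_A(n)]`: its `n`-th bounded component is an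
interval if `n ∈ A` and a point otherwise. -/
def pattern (A : Set ℕ) : Set ℝ :=
  Iic 0 ∪ ⋃ n : ℕ, Icc (4 * (n + 1) : ℝ) (4 * (n + 1) + A.indicator 1 n)

theorem indicator_bounds (A : Set ℕ) (n : ℕ) :
    0 ≤ A.indicator (1 : ℕ → ℝ) n ∧ A.indicator (1 : ℕ → ℝ) n ≤ 1 := by
  by_cases h : n ∈ A <;> simp [h]

theorem mem_pattern (A : Set ℕ) (y : ℝ) : y ∈ pattern A ↔
    y ≤ 0 ∨ ∃ n : ℕ, 4 * (n + 1) ≤ y ∧ y ≤ 4 * (n + 1) + A.indicator 1 n := by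
  simp [pattern]

theorem mem_pattern_left (A : Set ℕ) (n : ℕ) : (4 * (n + 1) : ℝ) ∈ pattern A :=
  (mem_pattern _ _).2 (Or.inr ⟨n, le_rfl, by linarith [(indicator_bounds A n).1]⟩)

theorem isClosed_pattern (A : Set ℕ) : IsClosed (pattern A) := by
  refine isClosed_Iic.union (LocallyFinite.isClosed_iUnion ?_ fun n => isClosed_Icc)
  intro y
  refine ⟨Iio (y + 1), Iio_mem_nhds (by linarith), (finite_le_nat ⌊y + 1⌋₊).subset ?_⟩
  rintro n ⟨z, hz, hz'⟩
  have h1 : z < y + 1 := hz'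
  have h2 := hz.1
  exact Nat.le_floor (by linarith [(n.cast_nonneg : (0 : ℝ) ≤ n)])

theorem pattern_window (A : Set ℕ) (n : ℕ) (y : ℝ) (hy : y ∈ pattern A)
    (h1 : 4 * (n + 1) ≤ y) (h2 : y < 4 * (n + 2)) : y ≤ 4 * (n + 1) + A.indicator 1 n := by
  rcases (mem_pattern _ _).1 hy with h | ⟨m, hm1, hm2⟩
  · linarith [(n.cast_nonneg : (0 : ℝ) ≤ n)]
  · have hb := indicator_bounds A m
    have h3 : (m : ℝ) < n + 1 := by linarith
    have h4 : (n : ℝ) < m + 1 := by linarith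
    have : m = n := by
      have h3' : m < n + 1 := by exact_mod_cast h3
      have h4' : n < m + 1 := by exact_mod_cast h4
      omega
    rwa [this] at hm2

/-- The points `4(n+1)` are the points of `pattern A` preceded by a gap. -/
theorem pattern_gap_iff (A : Set ℕ) (y : ℝ) :
    (y ∈ pattern A ∧ ∃ z < y, ∀ w ∈ Ioo z y, w ∉ pattern A) ↔
      ∃ n : ℕ, y = 4 * (n + 1) := by
  constructor
  · rintro ⟨hy, z, hz, hgap⟩
    rcases (mem_pattern _ _).1 hy with h | ⟨n, hn1, hn2⟩
    · obtain ⟨w, hw⟩ := exists_between hz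
      exact absurd ((mem_pattern A w).2 (Or.inl (by linarith [hw.2]))) (hgap w hw)
    · refine ⟨n, ?_⟩
      by_contra hne
      have hlt : (4 * (n + 1) : ℝ) < y := lt_of_le_of_ne hn1 (Ne.symm hne)
      obtain ⟨w, hw1, hw2⟩ := exists_between (max_lt hz hlt)
      refine hgap w ⟨lt_of_le_of_lt (le_max_left _ _) hw1, hw2⟩
        ((mem_pattern A w).2 (Or.inr ⟨n, ?_, by linarith⟩))
      exact ((le_max_right _ _).trans_lt hw1).le
  · rintro ⟨n, rfl⟩
    refine ⟨mem_pattern_left A n, 4 * (n + 1) - 1, by linarith, ?_⟩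
    rintro w ⟨hw1, hw2⟩ hw
    rcases (mem_pattern _ _).1 hw with h | ⟨m, hm1, hm2⟩
    · linarith [(n.cast_nonneg : (0 : ℝ) ≤ n)]
    · have hb := indicator_bounds A m
      have h3 : (m : ℝ) < n := by linarith
      have h4 : (m : ℝ) + 1 ≤ n := by exact_mod_cast h3
      linarith

theorem pattern_right_iff (A : Set ℕ) (n : ℕ) :
    n ∈ A ↔ ∃ z > (4 * (n + 1) : ℝ), Ioo (4 * (n + 1) : ℝ) z ⊆ pattern A := by
  constructor
  · intro h
    refine ⟨4 * (n + 1) + 1, by linarith, fun w hw => (mem_pattern A w).2 (Or.inr ⟨n, hw.1.le, ?_⟩)⟩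
    simpa [h] using hw.2.le
  · rintro ⟨z, hz, hsub⟩
    by_contra h
    obtain ⟨w, hw1, hw2⟩ := exists_between
      (lt_min hz (show (4 * (n + 1) : ℝ) < 4 * (n + 2) by linarith))
    have := pattern_window A n w (hsub ⟨hw1, hw2.trans_le (min_le_left _ _)⟩) hw1.le
      (hw2.trans_le (min_le_right _ _))
    simp [h] at this
    linarith

theorem exists_strictMono_index (A B : Set ℕ) (k : ℝ ≃o ℝ)
    (hk : ∀ y, y ∈ pattern A ↔ k y ∈ pattern B) :
    ∃ f : ℕ → ℕ, StrictMono f ∧ ∀ n : ℕ, k (4 * (n + 1)) = 4 * (f n + 1) := by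
  have : ∀ n : ℕ, ∃ m : ℕ, k (4 * (n + 1)) = 4 * (m + 1) := by
    intro n
    rw [← pattern_gap_iff B]
    obtain ⟨h1, z, hz, hgap⟩ := (pattern_gap_iff A (4 * (n + 1))).2 ⟨n, rfl⟩
    refine ⟨(hk _).1 h1, k z, k.lt_iff_lt.2 hz, fun w hw hwB => ?_⟩
    refine hgap (k.symm w) ⟨k.lt_symm_apply.2 hw.1, k.symm_apply_lt.2 hw.2⟩ ?_
    rw [hk, k.apply_symm_apply]
    exact hwB
  choose f hf using this
  refine ⟨f, fun a b hab => ?_, hf⟩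
  have h1 : k (4 * (a + 1)) < k (4 * (b + 1)) := by
    rw [k.lt_iff_lt]
    have : (a : ℝ) < b := by exact_mod_cast hab
    linarith
  rw [hf, hf] at h1
  have : (f a : ℝ) < f b := by linarith
  exact_mod_cast this

/-- The order type of the inclusion `pattern A ⊆ ℝ` determines `A`. -/
theorem eq_of_pattern_orderIso (A B : Set ℕ) (k : ℝ ≃o ℝ)
    (hk : ∀ y, y ∈ pattern A ↔ k y ∈ pattern B) : A = B := by
  have hk' : ∀ y, y ∈ pattern B ↔ k.symm y ∈ pattern A := fun y => by
    rw [hk, k.apply_symm_apply]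
  obtain ⟨f, hf, hfk⟩ := exists_strictMono_index A B k hk
  obtain ⟨g, hg, hgk⟩ := exists_strictMono_index B A k.symm hk'
  have hgf : ∀ n, g (f n) = n := by
    intro n
    have := hgk (f n)
    rw [← hfk, k.symm_apply_apply] at this
    have h2 : (n : ℝ) = g (f n) := by linarith
    exact_mod_cast h2.symm
  have hfn : ∀ n, f n = n := fun n =>
    le_antisymm ((hg.le_apply (x := f n)).trans (hgf n).le) hf.le_apply
  have hkn : ∀ n : ℕ, k (4 * (n + 1)) = 4 * (n + 1) := fun n => by rw [hfk, hfn]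
  ext n
  rw [pattern_right_iff, pattern_right_iff]
  constructor
  · rintro ⟨z, hz, hsub⟩
    refine ⟨k z, by rw [gt_iff_lt, ← hkn, k.lt_iff_lt]; exact hz, fun w hw => ?_⟩
    rw [hk']
    refine hsub ⟨k.lt_symm_apply.2 (by rw [hkn]; exact hw.1), k.symm_apply_lt.2 hw.2⟩
  · rintro ⟨z, hz, hsub⟩
    refine ⟨k.symm z, by rw [gt_iff_lt, k.lt_symm_apply, hkn]; exact hz, fun w hw => ?_⟩
    rw [hk]
    refine hsub ⟨by rw [← hkn, k.lt_iff_lt]; exact hw.1, k.lt_symm_apply.1 hw.2⟩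

/-- The distance to `pattern A`, truncated at `1`. -/
noncomputable def height (A : Set ℕ) (y : ℝ) : ℝ := min 1 (Metric.infDist y (pattern A))

theorem pattern_nonempty (A : Set ℕ) : (pattern A).Nonempty :=
  ⟨0, (mem_pattern A 0).2 (Or.inl le_rfl)⟩

theorem height_eq_zero_iff (A : Set ℕ) (y : ℝ) : height A y = 0 ↔ y ∈ pattern A := by
  rw [(isClosed_pattern A).mem_iff_infDist_zero (pattern_nonempty A), height]
  constructor
  · intro h
    rcases min_choice 1 (Metric.infDist y (pattern A)) with h' | h' <;> rw [h'] at h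
    · norm_num at h
    · exact h
  · intro h
    simp [h]

theorem height_mem (A : Set ℕ) (y : ℝ) : height A y ∈ Icc (0 : ℝ) 1 :=
  ⟨le_min zero_le_one Metric.infDist_nonneg, min_le_left _ _⟩

theorem lipschitz_height (A : Set ℕ) : LipschitzWith 1 (height A) := by
  exact (Metric.lipschitz_infDist_pt (pattern A)).const_min 1

theorem exists_height_eq (A : Set ℕ) (v : ℝ) (hv : v ∈ Icc (0 : ℝ) 1) (N : ℝ) :
    ∃ y ≥ N, height A y = v := by
  obtain ⟨n, hn⟩ := exists_nat_ge N
  have h0 : height A (4 * (n + 1)) = 0 := (height_eq_zero_iff _ _).2 (mem_pattern_left A n)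
  have h1 : height A (4 * (n + 1) + 2) = 1 := by
    refine min_eq_left ((Metric.le_infDist (pattern_nonempty A)).2 fun z hz => ?_)
    rw [Real.dist_eq, le_abs]
    by_contra! hcon
    have := pattern_window A n z hz (by linarith) (by linarith)
    linarith [(indicator_bounds A n).2]
  have := intermediate_value_Icc (show (4 * (n + 1) : ℝ) ≤ 4 * (n + 1) + 2 by linarith)
    (lipschitz_height A).continuous.continuousOn
  rw [h0, h1] at this
  obtain ⟨y, hy, rfl⟩ := this hv
  exact ⟨y, by linarith [hy.1, (n.cast_nonneg : (0 : ℝ) ≤ n)], rfl⟩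

/-! ### The topologies -/

theorem unitAddCircle_coe_eq_iff (a b : ℝ) :
    (a : UnitAddCircle) = b ↔ ∃ n : ℤ, (n : ℝ) = a - b := by
  rw [← sub_eq_zero, ← AddCircle.coe_sub, AddCircle.coe_eq_zero_iff]
  simp

/-- The continuous injection of the line that induces the topology attached to `A`. -/
noncomputable def windingMap (A : Set ℕ) (t : ℝ) : (ℕ → UnitAddCircle) × ℝ :=
  (fun k => ((t / 2 ^ k : ℝ) : UnitAddCircle), height A (Real.arsinh t))

theorem continuous_windingMap (A : Set ℕ) : Continuous (windingMap A) := by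
  refine Continuous.prodMk (continuous_pi fun k => ?_)
    ((lipschitz_height A).continuous.comp Real.continuous_arsinh)
  exact (AddCircle.continuous_mk' 1).comp (continuous_id.div_const _)

theorem injective_windingMap (A : Set ℕ) : Function.Injective (windingMap A) := by
  intro s t h
  have h1 : ∀ k : ℕ, ((s / 2 ^ k : ℝ) : UnitAddCircle) = ((t / 2 ^ k : ℝ) : UnitAddCircle) :=
    fun k => congrFun (congrArg Prod.fst h) k
  obtain ⟨k, hk⟩ := pow_unbounded_of_one_lt |s - t| (one_lt_two : (1 : ℝ) < 2)
  obtain ⟨m, hm⟩ := (unitAddCircle_coe_eq_iff _ _).1 (h1 k)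
  have h2 : (0 : ℝ) < 2 ^ k := by positivity
  have hm' : s - t = m * 2 ^ k := by
    rw [hm]
    field_simp
  rw [hm', abs_mul, abs_of_pos h2] at hk
  have hm1 : |(m : ℝ)| < 1 := by
    by_contra! hcon
    nlinarith
  have hm0 : m = 0 := by
    rw [← Int.abs_lt_one_iff]
    exact_mod_cast hm1
  rw [hm0] at hm'
  push_cast at hm'
  linarith

/-- The topology on `ℝ` attached to `A`. -/
noncomputable def leafTopology (A : Set ℕ) : TopologicalSpace ℝ :=
  TopologicalSpace.induced (windingMap A) inferInstance

/-- A copy of `ℝ` carrying the topology `leafTopology A`. -/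
def Leaf (_ : Set ℕ) : Type := ℝ

noncomputable instance (A : Set ℕ) : TopologicalSpace (Leaf A) := leafTopology A

/-- The identity map from the Euclidean line to `Leaf A`. -/
def toLeaf (A : Set ℕ) : ℝ ≃ Leaf A := Equiv.refl ℝ

theorem isEmbedding_leaf (A : Set ℕ) :
    IsEmbedding (fun y : Leaf A => windingMap A ((toLeaf A).symm y)) :=
  ⟨⟨rfl⟩, fun _ _ h => injective_windingMap A h⟩

instance (A : Set ℕ) : T2Space (Leaf A) := (isEmbedding_leaf A).t2Space

theorem metrizable_leaf (A : Set ℕ) : TopologicalSpace.MetrizableSpace (Leaf A) :=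
  (isEmbedding_leaf A).metrizableSpace

theorem continuous_toLeaf (A : Set ℕ) : Continuous (toLeaf A) :=
  (isEmbedding_leaf A).continuous_iff.2 (continuous_windingMap A)

/-- Points `t j` congruent to `x` modulo `2 ^ j` whose heights converge to that of `x` converge to
`x` in `Leaf A`; if they tend to an end `l` of the line, `x` is therefore a cluster point of `l`. -/
theorem mapClusterPt_toLeaf (A : Set ℕ) (l : Filter ℝ) (x : ℝ) (t : ℕ → ℝ) (ht : Tendsto t atTop l)
    (hmod : ∀ j, ∃ m : ℤ, t j = x + 2 ^ j * m)
    (hh : Tendsto (fun j => height A (Real.arsinh (t j))) atTop (𝓝 (height A (Real.arsinh x)))) :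
    MapClusterPt (toLeaf A x) l (toLeaf A) := by
  have hconv : Tendsto (fun j => toLeaf A (t j)) atTop (𝓝 (toLeaf A x)) := by
    rw [(isEmbedding_leaf A).tendsto_nhds_iff]
    refine Tendsto.prodMk_nhds (tendsto_pi_nhds.2 fun k => ?_) hh
    refine tendsto_const_nhds.congr' ?_
    filter_upwards [eventually_ge_atTop k] with j hj
    obtain ⟨m, hm⟩ := hmod j
    refine (unitAddCircle_coe_eq_iff (x / 2 ^ k) (t j / 2 ^ k)).2 ⟨-(2 ^ (j - k) * m), ?_⟩
    have hpow : (2 : ℝ) ^ j = 2 ^ (j - k) * 2 ^ k := by rw [← pow_add, Nat.sub_add_cancel hj]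
    rw [hm, hpow]
    push_cast
    field_simp
    ring
  exact ClusterPt.mono (f := map (toLeaf A) (map t atTop)) hconv.mapClusterPt (map_mono ht)

theorem limTop_toLeaf (A : Set ℕ) : limTop (toLeaf A) = univ := by
  rw [eq_univ_iff_forall]
  intro x
  have : ∀ j : ℕ, ∃ t : ℝ, (j : ℝ) ≤ t ∧ (∃ m : ℤ, t = x + 2 ^ j * m) ∧
      dist (height A (Real.arsinh t)) (height A (Real.arsinh x)) ≤ 1 / ((j : ℝ) + 1) := by
    intro j
    -- `y` is so large that a step of length `2 ^ j` from `sinh y` moves `arsinh` by at most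
    -- `1 / (j + 1)`.
    obtain ⟨y, hy, hyv⟩ := exists_height_eq A _ (height_mem A (Real.arsinh x))
      (2 ^ j * ((j : ℝ) + 1))
    have h2 : (0 : ℝ) < 2 ^ j := by positivity
    have h1 : (1 : ℝ) ≤ 2 ^ j := one_le_pow₀ one_le_two
    have hj : (0 : ℝ) ≤ j := j.cast_nonneg
    have hy0 : 0 ≤ y := le_trans (by positivity) hy
    have hys : y ≤ Real.sinh y := Real.self_le_sinh_iff.2 hy0
    set m : ℤ := ⌈(Real.sinh y - x) / 2 ^ j⌉ with hm
    have hm1 : Real.sinh y ≤ x + 2 ^ j * m := by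
      have := Int.le_ceil ((Real.sinh y - x) / 2 ^ j)
      rw [div_le_iff₀ h2] at this
      linarith
    have hm2 : x + 2 ^ j * m ≤ Real.sinh y + 2 ^ j := by
      have := (Int.ceil_lt_add_one ((Real.sinh y - x) / 2 ^ j)).le
      rw [← sub_le_iff_le_add, le_div_iff₀ h2] at this
      linarith
    refine ⟨x + 2 ^ j * m, by nlinarith, ⟨m, rfl⟩, ?_⟩
    rw [← hyv]
    refine ((lipschitz_height A).dist_le_mul _ _).trans ?_
    set ε : ℝ := 1 / ((j : ℝ) + 1) with hε
    have hεpos : 0 < ε := by positivity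
    have hlow : y ≤ Real.arsinh (x + 2 ^ j * m) := by
      rw [← Real.sinh_le_sinh, Real.sinh_arsinh]
      exact hm1
    have hup : Real.arsinh (x + 2 ^ j * m) ≤ y + ε := by
      rw [← Real.sinh_le_sinh, Real.sinh_arsinh, Real.sinh_add]
      have a1 : ε ≤ Real.sinh ε := Real.self_le_sinh_iff.2 hεpos.le
      have a2 : 1 ≤ Real.cosh ε := Real.one_le_cosh ε
      have a3 : Real.sinh y < Real.cosh y := Real.sinh_lt_cosh y
      have a4 : 2 ^ j ≤ y * ε := by
        rw [hε, mul_one_div, le_div_iff₀ (by positivity)]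
        exact hy
      have a5 : y * ε ≤ Real.cosh y * Real.sinh ε :=
        mul_le_mul (by linarith) a1 hεpos.le (by linarith)
      have a6 : Real.sinh y ≤ Real.sinh y * Real.cosh ε :=
        le_mul_of_one_le_right (by linarith) a2
      linarith
    rw [Real.dist_eq, abs_of_nonneg (by linarith)]
    simp only [NNReal.coe_one]
    linarith
  choose t ht1 ht2 ht3 using this
  refine mapClusterPt_toLeaf A atTop x t
    (tendsto_atTop_mono ht1 tendsto_natCast_atTop_atTop) ht2 ?_
  rw [tendsto_iff_dist_tendsto_zero]
  exact squeeze_zero (fun _ => dist_nonneg) ht3 tendsto_one_div_add_atTop_nhds_zero_nat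

theorem height_arsinh_of_nonpos (A : Set ℕ) (t : ℝ) (ht : t ≤ 0) :
    height A (Real.arsinh t) = 0 :=
  (height_eq_zero_iff _ _).2 ((mem_pattern _ _).2 (Or.inl (Real.arsinh_nonpos_iff.2 ht)))

theorem mem_limBot_toLeaf (A : Set ℕ) (x : ℝ) :
    x ∈ limBot (toLeaf A) ↔ Real.arsinh x ∈ pattern A := by
  rw [← height_eq_zero_iff]
  constructor
  · intro hx
    by_contra hne
    have hpos : 0 < height A (Real.arsinh x) :=
      lt_of_le_of_ne (height_mem A _).1 (Ne.symm hne)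
    have hopen : ∀ᶠ y in 𝓝 (toLeaf A x), 0 < (windingMap A ((toLeaf A).symm y)).2 :=
      (continuous_snd.comp (isEmbedding_leaf A).continuous).continuousAt.eventually
        (lt_mem_nhds hpos)
    have hf := mapClusterPt_iff_frequently.1 hx _ hopen
    obtain ⟨t, ht, ht0⟩ := (hf.and_eventually (eventually_le_atBot 0)).exists
    have : 0 < height A (Real.arsinh t) := ht
    rw [height_arsinh_of_nonpos A t ht0] at this
    exact lt_irrefl _ this
  · intro hx
    have hlim : Tendsto (fun j : ℕ => x + 2 ^ j * ((-1 : ℤ) : ℝ)) atTop atBot := by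
      have : Tendsto (fun j : ℕ => x + -((2 : ℝ) ^ j)) atTop atBot :=
        tendsto_atBot_add_const_left _ _
          (tendsto_neg_atTop_atBot.comp (tendsto_pow_atTop_atTop_of_one_lt one_lt_two))
      refine this.congr fun j => ?_
      push_cast
      ring
    refine mapClusterPt_toLeaf A atBot x _ hlim (fun j => ⟨-1, rfl⟩) ?_
    rw [hx]
    refine tendsto_const_nhds.congr' ?_
    filter_upwards [hlim.eventually (eventually_le_atBot 0)] with j hj
    exact (height_arsinh_of_nonpos A _ hj).symm

theorem isMeagre_leaf (A : Set ℕ) : IsMeagre (univ : Set (Leaf A)) := by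
  have hU : (univ : Set (Leaf A)) = ⋃ n : ℕ, toLeaf A '' Icc (-n : ℝ) n := by
    symm
    rw [eq_univ_iff_forall]
    intro y
    obtain ⟨n, hn⟩ := exists_nat_ge |(toLeaf A).symm y|
    exact mem_iUnion.2 ⟨n, _, abs_le.1 hn, (toLeaf A).apply_symm_apply y⟩
  rw [hU]
  refine isMeagre_iUnion fun n => IsNowhereDense.isMeagre ?_
  have hcl : IsClosed (toLeaf A '' Icc (-n : ℝ) n) :=
    (isCompact_Icc.image (continuous_toLeaf A)).isClosed
  rw [hcl.isNowhereDense_iff, eq_empty_iff_forall_notMem]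
  intro y hy
  have hx : (toLeaf A).symm y ∈ limTop (toLeaf A) := limTop_toLeaf A ▸ mem_univ _
  have hx' : MapClusterPt y atTop (toLeaf A) := by
    have : MapClusterPt (toLeaf A ((toLeaf A).symm y)) atTop (toLeaf A) := hx
    rwa [Equiv.apply_symm_apply] at this
  have hf := mapClusterPt_iff_frequently.1 hx' _ (isOpen_interior.mem_nhds hy)
  obtain ⟨t, ht, htn⟩ := (hf.and_eventually (eventually_gt_atTop (n : ℝ))).exists
  obtain ⟨r, hr, hrt⟩ := interior_subset ht
  have := (toLeaf A).injective hrt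
  linarith [hr.2]

theorem eq_of_homeomorph (A B : Set ℕ) (h : Leaf A ≃ₜ Leaf B) : A = B := by
  obtain ⟨k, hk⟩ := exists_orderIso (toLeaf A) (toLeaf B) (continuous_toLeaf A)
    (continuous_toLeaf B) (limTop_toLeaf A) (limTop_toLeaf B)
    ⟨0, (mem_limBot_toLeaf B 0).2 ((mem_pattern _ _).2 (Or.inl (by simp))), -1,
      (mem_limBot_toLeaf B (-1)).2
        ((mem_pattern _ _).2 (Or.inl (Real.arsinh_nonpos_iff.2 (by norm_num)))), by norm_num⟩
    (by
      intro hu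
      have h1 : Real.sinh 2 ∈ limBot (toLeaf B) := hu ▸ mem_univ _
      rw [mem_limBot_toLeaf, Real.arsinh_sinh, mem_pattern] at h1
      rcases h1 with h1 | ⟨n, h1, -⟩
      · norm_num at h1
      · linarith [(n.cast_nonneg : (0 : ℝ) ≤ n)]) h
  refine eq_of_pattern_orderIso A B
    ((Real.sinhOrderIso.trans k).trans Real.sinhOrderIso.symm) fun y => ?_
  have := hk (Real.sinh y)
  rw [mem_limBot_toLeaf, mem_limBot_toLeaf, Real.arsinh_sinh] at this
  exact this

/-- There are 𝔠 mutually non-homeomorphic τ ∈ 𝓛 such that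
(ℝ, τ) is a metrizable space of first category. -/
theorem statement_11 :
    ∃ 𝒯 : Set (TopologicalSpace ℝ),
      Cardinal.mk ↥𝒯 = Cardinal.continuum ∧
      (∀ τ ∈ 𝒯, InL τ ∧ @TopologicalSpace.MetrizableSpace ℝ τ ∧ @IsMeagre ℝ τ Set.univ) ∧
      ∀ τ ∈ 𝒯, ∀ τ' ∈ 𝒯, τ ≠ τ' → IsEmpty (@Homeomorph ℝ ℝ τ τ') := by
  refine ⟨range leafTopology, ?_, ?_, ?_⟩
  · have hinj : Function.Injective leafTopology := by
      intro A B hAB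
      refine eq_of_homeomorph A B ⟨Equiv.refl ℝ, ?_, ?_⟩
      · exact continuous_id_iff_le.2 hAB.le
      · exact continuous_id_iff_le.2 hAB.ge
    rw [Cardinal.mk_range_eq _ hinj, Cardinal.mk_set, Cardinal.mk_nat, Cardinal.two_power_aleph0]
  · rintro _ ⟨A, rfl⟩
    refine ⟨⟨fun U hU => ?_, inferInstanceAs (T2Space (Leaf A))⟩, metrizable_leaf A,
      isMeagre_leaf A⟩
    exact IsOpen.preimage (continuous_toLeaf A) hU
  · rintro _ ⟨A, rfl⟩ _ ⟨B, rfl⟩ hne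
    exact ⟨fun h => hne (congrArg leafTopology (eq_of_homeomorph A B h))⟩
end
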